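/- arXiv:math/0508326 — 2 statements merged into one kernel-verified Lean document; each statement's English description precedes it below -/
import Mathlib

section
/- Let n ≥ 2, d ≥ 1 and ε > 0. There exists a constant C = C(d,n,ε) with the following property. Let F ∈ ℤ[x_0,…,x_n] be a primitive homogeneous polynomial of degree d which is irreducible over ℚ and not divisible by x_0 (so the hyperplane x_0 = 0 intersects X = {F = 0} ⊂ P^n properly), set r = n−1, and let B ≥ 1 be real. Let p_1,…,p_t be distinct primes and for each i let P_i ∈ P^n(𝔽_{p_i}) be a point on the reduction X_{p_i} of multiplicity μ_i ≥ 1 with x_0-coordinate nonzero, and suppose that p_1^{(d/μ_1)^{1/r}}⋯p_t^{(d/μ_t)^{1/r}} ≥ B^{1+ε}. Then there exists a homogeneous polynomial G ∈ ℚ[x_0,…,x_n] of degree at most C which is not divisible by F and which vanishes at every rational point of X representable by an integer tuple (1,x_1,…,x_n) with |x_m| ≤ B for 1 ≤ m ≤ n whose reduction mod p_i equals P_i for every i. -/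
open MvPolynomial

/-- `v` reduces mod `p` to the same point of `P^n(𝔽_p)` as the integer tuple `ξ`. -/
def ReducesTo {n : ℕ} (p : ℕ) (ξ : Fin n → ℤ) (v : Fin n → ZMod p) : Prop :=
  ∃ c : ZMod p, c ≠ 0 ∧ (fun i => ((ξ i : ZMod p))) = c • v

/-- The point of `P^n(𝔽_p)` represented by `v` has multiplicity `μ` on the reduction
`X_p = {F ≡ 0 (mod p)}`. -/
def MultiplicityAt {n : ℕ} (p : ℕ) (F : MvPolynomial (Fin n) ℤ) (v : Fin n → ZMod p)
    (μ : ℕ) : Prop :=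
  (∀ j < μ, homogeneousComponent j
      (bind₁ (fun i => C (v i) + X i) (MvPolynomial.map (Int.castRingHom (ZMod p)) F)) = 0) ∧
  homogeneousComponent μ
      (bind₁ (fun i => C (v i) + X i) (MvPolynomial.map (Int.castRingHom (ZMod p)) F)) ≠ 0

/-!
The proof is the determinant method over `ℤ`. Let `f` be the restriction of `F` to the chart
`x_0 = 1`, and evaluate the `N` monomials of degree at most `D` not divisible by the leading
monomial of `f` at `N` of the points to be covered. The determinant of this matrix is at most
`N! * B ^ S`, where `S` is the sum of the degrees of the monomials. On the other hand, it is
divisible by a high power of each `p_i`: all the points lie in one residue class mod `p_i`, and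
there every function on the hypersurface is a combination of the monomials in the coordinates
centred at `P_i` that are not divisible by the lowest term of `f` mod `p_i`. That term has degree
at most `μ_i`, so few of these monomials have low degree, while those of degree `k` take values
divisible by `p_i ^ k`. Comparing the leading terms in `D` of the two estimates, the hypothesis on
`∏ p_i ^ ((d / μ_i) ^ (1 / r))` forces the determinant to vanish once `D` is large in terms of
`n`, `d` and `ε`. Hence the matrix with one row for every point has rank less than `N`, and a
linear relation between its columns is a polynomial that vanishes at the points and is not
divisible by `f`, having no monomial divisible by the leading monomial of `f`.
-/

section StandardExponents

variable {σ : Type*} [Fintype σ] [DecidableEq σ]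

/-- The exponent vectors of total degree less than `k`. -/
def exponentsLT (σ : Type*) [Fintype σ] [DecidableEq σ] (k : ℕ) : Finset (σ →₀ ℕ) :=
  (Finset.range k).biUnion fun i => Finset.univ.finsuppAntidiag i

/-- The exponent vectors of total degree less than `k` of the monomials not divisible by `X ^ l`:
the standard monomials with respect to an ideal whose leading ideal is generated by `X ^ l`. -/
def standardExponents (l : σ →₀ ℕ) (k : ℕ) : Finset (σ →₀ ℕ) :=
  {a ∈ exponentsLT σ k | ¬ l ≤ a}

/-- The number of standard monomials of degree less than `k` in `r + 1` variables with respect to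
a leading monomial of degree `m`, i.e. the affine Hilbert function of a hypersurface of degree `m`
in affine `(r + 1)`-space. -/
def hypersurfaceHilbert (r m k : ℕ) : ℕ :=
  ∑ i ∈ Finset.Ico (k - m) k, (i + r).choose r

lemma mem_exponentsLT {k : ℕ} {a : σ →₀ ℕ} : a ∈ exponentsLT σ k ↔ a.degree < k := by
  simp [exponentsLT, Finset.mem_finsuppAntidiag, Finsupp.degree_eq_sum]

lemma mem_standardExponents {k : ℕ} {l a : σ →₀ ℕ} :
    a ∈ standardExponents l k ↔ a.degree < k ∧ ¬ l ≤ a := by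
  rw [standardExponents, Finset.mem_filter, mem_exponentsLT]

lemma card_exponentsLT (r k : ℕ) :
    (exponentsLT (Fin (r + 1)) k).card = ∑ i ∈ Finset.range k, (i + r).choose r := by
  rw [exponentsLT, Finset.card_biUnion]
  · refine Finset.sum_congr rfl fun i _ => ?_
    rw [Finset.card_finsuppAntidiag_nat_eq_choose, Finset.card_univ, Fintype.card_fin,
      show r + 1 + i - 1 = i + r by omega, Nat.choose_symm_add]
  · intro i _ j _ hij
    rw [Function.onFun, Finset.disjoint_left]
    intro a hai haj
    rw [Finset.mem_finsuppAntidiag] at hai haj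
    exact hij (hai.1.symm.trans haj.1)

lemma card_filter_le_exponentsLT (l : σ →₀ ℕ) (k : ℕ) :
    ({a ∈ exponentsLT σ k | l ≤ a} : Finset _).card = (exponentsLT σ (k - l.degree)).card := by
  rw [← Finset.card_map (addRightEmbedding l) (s := exponentsLT σ (k - l.degree))]
  congr 1
  ext b
  simp only [Finset.mem_filter, Finset.mem_map, mem_exponentsLT, addRightEmbedding_apply]
  constructor
  · rintro ⟨hb, hlb⟩
    refine ⟨b - l, ?_, tsub_add_cancel_of_le hlb⟩
    have := congrArg Finsupp.degree (tsub_add_cancel_of_le hlb)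
    rw [map_add] at this
    omega
  · rintro ⟨a, ha, rfl⟩
    rw [map_add]
    exact ⟨by omega, le_add_self⟩

lemma card_standardExponents {r : ℕ} (l : Fin (r + 1) →₀ ℕ) (k : ℕ) :
    (standardExponents l k).card = hypersurfaceHilbert r l.degree k := by
  have hsplit := Finset.card_filter_add_card_filter_not (s := exponentsLT (Fin (r + 1)) k) (l ≤ ·)
  rw [card_filter_le_exponentsLT, card_exponentsLT, card_exponentsLT,
    ← Finset.sum_range_add_sum_Ico _ (Nat.sub_le k l.degree)] at hsplit
  exact Nat.add_left_cancel hsplit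

lemma hypersurfaceHilbert_mono (r k : ℕ) : Monotone (hypersurfaceHilbert r · k) :=
  fun _ _ h => Finset.sum_le_sum_of_subset (Finset.Ico_subset_Ico (Nat.sub_le_sub_left h k) le_rfl)

lemma hypersurfaceHilbert_add_choose (r m k : ℕ) :
    hypersurfaceHilbert r m k + (k - m + r).choose (r + 1) = (k + r).choose (r + 1) := by
  have sum_range_choose (j : ℕ) :
      ∑ i ∈ Finset.range j, (i + r).choose r = (j + r).choose (r + 1) := by
    cases j with
    | zero => simp
    | succ j => rw [Nat.sum_range_add_choose, add_right_comm]
  rw [← sum_range_choose, ← sum_range_choose, add_comm, hypersurfaceHilbert,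
    Finset.sum_range_add_sum_Ico _ (Nat.sub_le k m)]

lemma sum_hypersurfaceHilbert (r m K : ℕ) :
    ∑ k ∈ Finset.Icc 1 K, hypersurfaceHilbert r m k = hypersurfaceHilbert (r + 1) m K := by
  induction K with
  | zero => simp [hypersurfaceHilbert]
  | succ K ih =>
    rw [Finset.sum_Icc_succ_top (by omega), ih]
    have hK := hypersurfaceHilbert_add_choose (r + 1) m K
    have hK' := hypersurfaceHilbert_add_choose (r + 1) m (K + 1)
    have hr := hypersurfaceHilbert_add_choose r m (K + 1)
    have pascal (j : ℕ) : (j + 1 + (r + 1)).choose (r + 1 + 1) =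
        (j + 1 + r).choose (r + 1) + (j + (r + 1)).choose (r + 1 + 1) := by
      rw [show j + 1 + (r + 1) = j + 1 + r + 1 by ring, Nat.choose_succ_succ,
        show j + 1 + r = j + (r + 1) by ring]
    rw [pascal] at hK'
    rcases le_or_gt m K with hmK | hKm
    · rw [Nat.succ_sub hmK] at hK' hr
      rw [Nat.succ_eq_add_one, pascal] at hK'
      rw [Nat.succ_eq_add_one] at hr
      omega
    · rw [Nat.sub_eq_zero_of_le hKm.le, Nat.choose_eq_zero_of_lt (by omega)] at hK
      rw [Nat.sub_eq_zero_of_le hKm, Nat.choose_eq_zero_of_lt (by omega)] at hK' hr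
      omega

lemma sum_card_filter_le_eq_sum_min {ι : Type*} (s : Finset ι) (w : ι → ℕ) (K : ℕ) :
    ∑ k ∈ Finset.Icc 1 K, ({j ∈ s | k ≤ w j} : Finset ι).card = ∑ j ∈ s, min K (w j) := by
  simp only [Finset.card_filter]
  rw [Finset.sum_comm]
  refine Finset.sum_congr rfl fun j _ => ?_
  rw [← Finset.card_filter, ← Nat.add_sub_cancel (min K (w j)) 1, ← Nat.card_Icc]
  congr 1
  ext k
  simp only [Finset.mem_filter, Finset.mem_Icc, le_min_iff, and_assoc]

lemma sum_card_sub_le_sum {ι : Type*} [Fintype ι] (w : ι → ℕ) (K : ℕ) (h : ℕ → ℕ)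
    (hw : ∀ k ∈ Finset.Icc 1 K, ({j | w j < k} : Finset ι).card ≤ h k) :
    ∑ k ∈ Finset.Icc 1 K, (Fintype.card ι - h k) ≤ ∑ j, w j := by
  calc ∑ k ∈ Finset.Icc 1 K, (Fintype.card ι - h k)
      ≤ ∑ k ∈ Finset.Icc 1 K, ({j | k ≤ w j} : Finset ι).card := Finset.sum_le_sum fun k hk => by
        have := Finset.card_filter_add_card_filter_not (s := (Finset.univ : Finset ι)) (w · < k)
        simp only [not_lt, Finset.card_univ] at this
        have := hw k hk
        omega
    _ = ∑ j, min K (w j) := sum_card_filter_le_eq_sum_min _ w K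
    _ ≤ ∑ j, w j := Finset.sum_le_sum fun _ _ => min_le_right _ _

lemma sum_degree_standardExponents_add {r : ℕ} (l : Fin (r + 1) →₀ ℕ) (D : ℕ) :
    ∑ a ∈ standardExponents l (D + 1), a.degree + hypersurfaceHilbert (r + 1) l.degree D =
      D * hypersurfaceHilbert r l.degree (D + 1) := by
  have hdegree : ∑ a ∈ standardExponents l (D + 1), a.degree =
      ∑ k ∈ Finset.Icc 1 D, ({a ∈ standardExponents l (D + 1) | k ≤ a.degree} : Finset _).card := by
    rw [sum_card_filter_le_eq_sum_min]
    refine Finset.sum_congr rfl fun a ha => (min_eq_right ?_).symm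
    exact Nat.lt_succ_iff.1 (mem_standardExponents.1 ha).1
  have hsplit : ∀ k ∈ Finset.Icc 1 D,
      ({a ∈ standardExponents l (D + 1) | k ≤ a.degree} : Finset _).card +
        hypersurfaceHilbert r l.degree k = hypersurfaceHilbert r l.degree (D + 1) := by
    intro k hk
    rw [Finset.mem_Icc] at hk
    rw [← card_standardExponents, ← card_standardExponents,
      ← Finset.card_filter_add_card_filter_not (s := standardExponents l (D + 1)) (k ≤ ·.degree)]
    congr 2
    ext a
    simp only [Finset.mem_filter, mem_standardExponents]
    grind
  rw [hdegree, ← sum_hypersurfaceHilbert, ← Finset.sum_add_distrib, Finset.sum_congr rfl hsplit,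
    Finset.sum_const, Nat.card_Icc, Nat.add_sub_cancel, smul_eq_mul]

end StandardExponents

section Asymptotics

open Filter Topology Nat

lemma tendsto_atTop_of_tendsto_div {u : ℕ → ℕ} {θ : ℝ} (hθ : 0 < θ)
    (hu : Tendsto (fun D : ℕ => (u D : ℝ) / D) atTop (𝓝 θ)) : Tendsto u atTop atTop := by
  rw [← tendsto_natCast_atTop_iff (R := ℝ)]
  refine (hu.pos_mul_atTop hθ tendsto_natCast_atTop_atTop).congr' ?_
  filter_upwards [eventually_ne_atTop 0] with D hD
  exact div_mul_cancel₀ _ (Nat.cast_ne_zero.2 hD)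

lemma tendsto_choose_div_pow (r : ℕ) {u : ℕ → ℕ} {θ : ℝ} (hθ : 0 < θ)
    (hu : Tendsto (fun D : ℕ => (u D : ℝ) / D) atTop (𝓝 θ)) :
    Tendsto (fun D : ℕ => ((u D).choose r : ℝ) / D ^ r) atTop (𝓝 (θ ^ r / r !)) := by
  have hequiv := ((isEquivalent_choose r).comp_tendsto (tendsto_atTop_of_tendsto_div hθ hu)).div
    (Asymptotics.IsEquivalent.refl (u := fun D : ℕ => (D : ℝ) ^ r))
  refine hequiv.symm.tendsto_nhds ?_
  refine ((hu.pow r).div_const (r ! : ℝ)).congr fun D => ?_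
  simp only [Pi.div_apply, Function.comp_apply, div_pow]
  ring

lemma tendsto_hypersurfaceHilbert_div_pow (r m : ℕ) {u : ℕ → ℕ} {θ : ℝ} (hθ : 0 < θ)
    (hu : Tendsto (fun D : ℕ => (u D : ℝ) / D) atTop (𝓝 θ)) :
    Tendsto (fun D : ℕ => (hypersurfaceHilbert r m (u D) : ℝ) / D ^ r) atTop
      (𝓝 (m * (θ ^ r / r !))) := by
  have hm : ∀ᶠ D in atTop, m ≤ u D := (tendsto_atTop_of_tendsto_div hθ hu).eventually_ge_atTop m
  have hshift (j : ℕ) : Tendsto (fun D : ℕ => ((u D - m + j + r : ℕ) : ℝ) / D) atTop (𝓝 θ) := by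
    have h := hu.add (tendsto_const_div_atTop_nhds_zero_nat (j + r - m : ℝ))
    rw [add_zero] at h
    refine h.congr' ?_
    filter_upwards [hm] with D hD
    push_cast [hD]
    ring
  have hsum := tendsto_finsetSum (Finset.range m) fun j _ =>
    tendsto_choose_div_pow r hθ (hshift j)
  rw [Finset.sum_const, Finset.card_range, nsmul_eq_mul] at hsum
  refine hsum.congr' ?_
  filter_upwards [hm] with D hD
  rw [hypersurfaceHilbert, Finset.sum_Ico_eq_sum_range, Nat.sub_sub_self hD, Nat.cast_sum,
    Finset.sum_div]

lemma tendsto_natCast_add_div_self (c : ℕ) :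
    Tendsto (fun D : ℕ => ((D + c : ℕ) : ℝ) / D) atTop (𝓝 1) := by
  have h := (tendsto_const_div_atTop_nhds_zero_nat (c : ℝ)).const_add 1
  rw [add_zero] at h
  refine h.congr' ?_
  filter_upwards [eventually_ne_atTop 0] with D hD
  rw [Nat.cast_add, add_div, div_self (Nat.cast_ne_zero.2 hD)]

lemma tendsto_hypersurfaceHilbert_succ_div_pow (r m : ℕ) :
    Tendsto (fun D : ℕ => (hypersurfaceHilbert r m (D + 1) : ℝ) / D ^ r) atTop (𝓝 (m / r !)) := by
  simpa only [one_pow, mul_one_div] using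
    tendsto_hypersurfaceHilbert_div_pow r m one_pos (tendsto_natCast_add_div_self 1)

lemma tendsto_hypersurfaceHilbert_succ_atTop {r m : ℕ} (hr : r ≠ 0) (hm : m ≠ 0) :
    Tendsto (fun D => hypersurfaceHilbert r m (D + 1)) atTop atTop := by
  rw [← tendsto_natCast_atTop_iff (R := ℝ)]
  refine ((tendsto_hypersurfaceHilbert_succ_div_pow r m).pos_mul_atTop (by positivity)
    ((tendsto_pow_atTop hr).comp tendsto_natCast_atTop_atTop)).congr' ?_
  filter_upwards [eventually_ne_atTop 0] with D hD
  exact div_mul_cancel₀ _ (pow_ne_zero _ (Nat.cast_ne_zero.2 hD))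

lemma tendsto_log_factorial_hypersurfaceHilbert {r m : ℕ} (hr : r ≠ 0) (hm : m ≠ 0) :
    Tendsto (fun D : ℕ => Real.log (hypersurfaceHilbert r m (D + 1))! / (D : ℝ) ^ (r + 1)) atTop
      (𝓝 0) := by
  have hH := tendsto_hypersurfaceHilbert_succ_div_pow r m
  have hlog : Tendsto (fun D : ℕ => Real.log D / D) atTop (𝓝 0) :=
    (by simpa using Real.isLittleO_log_id_atTop.tendsto_div_nhds_zero :
      Tendsto (fun x : ℝ => Real.log x / x) atTop (𝓝 0)).comp tendsto_natCast_atTop_atTop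
  have hbound := (hH.mul hlog).mul_const (r + 1 : ℝ)
  rw [mul_zero, zero_mul] at hbound
  have hle : ∀ᶠ D : ℕ in atTop, (hypersurfaceHilbert r m (D + 1) : ℝ) ≤ D ^ (r + 1) := by
    have h := hH.mul (tendsto_const_div_atTop_nhds_zero_nat (1 : ℝ))
    rw [mul_zero] at h
    filter_upwards [h.eventually_le_const one_pos, eventually_gt_atTop 0] with D hD hD0
    rwa [← div_eq_mul_one_div, div_div, ← pow_succ, div_le_one (by positivity)] at hD
  refine squeeze_zero' (Eventually.of_forall fun D => ?_) ?_ hbound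
  · exact div_nonneg (Real.log_natCast_nonneg _) (by positivity)
  · filter_upwards [hle, (tendsto_hypersurfaceHilbert_succ_atTop hr hm).eventually_gt_atTop 0,
      eventually_gt_atTop 0] with D hD hH0 hD0
    set H := hypersurfaceHilbert r m (D + 1)
    have hfactorial : Real.log H ! ≤ H * ((r + 1) * Real.log D) := calc
      Real.log H ! ≤ Real.log (H ^ H : ℕ) :=
        Real.log_le_log (by positivity) (mod_cast Nat.factorial_le_pow H)
      _ = H * Real.log H := by rw [Nat.cast_pow, Real.log_pow]
      _ ≤ H * Real.log (D ^ (r + 1)) := by gcongr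
      _ = H * ((r + 1) * Real.log D) := by rw [Real.log_pow]; push_cast; rfl
    calc Real.log H ! / D ^ (r + 1) ≤ H * ((r + 1) * Real.log D) / D ^ (r + 1) := by gcongr
      _ = H / D ^ r * (Real.log D / D) * (r + 1) := by rw [pow_succ]; field_simp

lemma mul_sub_hypersurfaceHilbert_le_sum (N r m K : ℕ) :
    (K * N - hypersurfaceHilbert (r + 1) m K : ℝ) ≤
      (∑ k ∈ Finset.Icc 1 K, (N - hypersurfaceHilbert r m k) : ℕ) := by
  rw [sub_le_iff_le_add]
  norm_cast
  rw [← sum_hypersurfaceHilbert, ← Finset.sum_add_distrib]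
  calc K * N = ∑ _k ∈ Finset.Icc 1 K, N := by simp
    _ ≤ _ := Finset.sum_le_sum fun k _ => le_tsub_add

lemma eventually_lt_sum_sub_hypersurfaceHilbert {r d μ : ℕ} (hr : r ≠ 0) (hd : d ≠ 0) (hμ : μ ≠ 0)
    {η : ℝ} (hη : η < d / (r !) - d / (r + 1)!) :
    ∀ᶠ D : ℕ in atTop, ((d : ℝ) / μ) ^ (1 / r : ℝ) * (η * D ^ (r + 1)) ≤
      (∑ k ∈ Finset.Icc 1 ⌊((d : ℝ) / μ) ^ (1 / r : ℝ) * D⌋₊,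
        (hypersurfaceHilbert r d (D + 1) - hypersurfaceHilbert r μ k) : ℕ) := by
  set θ := ((d : ℝ) / μ) ^ (1 / r : ℝ)
  have hθ : 0 < θ := by positivity
  have hθr : θ ^ r = d / μ := by
    rw [← Real.rpow_mul_natCast (by positivity), one_div_mul_cancel (Nat.cast_ne_zero.2 hr),
      Real.rpow_one]
  have hfloor : Tendsto (fun D : ℕ => (⌊θ * D⌋₊ : ℝ) / D) atTop (𝓝 θ) :=
    (tendsto_nat_floor_mul_div_atTop hθ.le).comp tendsto_natCast_atTop_atTop
  have hlim := (hfloor.mul (tendsto_hypersurfaceHilbert_succ_div_pow r d)).sub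
    (tendsto_hypersurfaceHilbert_div_pow (r + 1) μ hθ hfloor)
  have hlimit : θ * η < θ * (d / r !) - μ * (θ ^ (r + 1) / (r + 1)!) := by
    have h : μ * (θ ^ (r + 1) / (r + 1)!) = θ * (d / (r + 1)!) := by
      rw [pow_succ, hθr]; field_simp
    rw [h, ← mul_sub]
    gcongr
  filter_upwards [hlim.eventually_const_lt hlimit, eventually_gt_atTop 0] with D hD hD0
  refine le_trans ?_ (mul_sub_hypersurfaceHilbert_le_sum _ r μ _)
  have hpow : (0 : ℝ) < D ^ (r + 1) := by positivity
  rw [← mul_assoc, ← le_div_iff₀ hpow]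
  refine hD.le.trans_eq ?_
  rw [pow_succ (D : ℝ) r]
  field_simp

/-- In the determinant method `D` bounds the degree of the auxiliary form, each `p i` divides the
determinant to an order at least `(d / μ i) ^ (1 / r) * Y`, and the logarithmic term accounts for
the number of terms in the expansion of the determinant. -/
lemma exists_determinant_method_parameters {r d : ℕ} (hr : r ≠ 0) (hd : d ≠ 0) {ε : ℝ}
    (hε : 0 < ε) (N₀ : ℕ) :
    ∃ D : ℕ, N₀ < hypersurfaceHilbert r d (D + 1) ∧ ∃ Y : ℝ, 0 ≤ Y ∧ ∃ K : ℕ → ℕ,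
      (∀ μ ∈ Finset.Icc 1 d, ((d : ℝ) / μ) ^ (1 / r : ℝ) * Y ≤
        (∑ k ∈ Finset.Icc 1 (K μ),
          (hypersurfaceHilbert r d (D + 1) - hypersurfaceHilbert r μ k) : ℕ)) ∧
      Real.logb 2 (hypersurfaceHilbert r d (D + 1))! +
        (D * hypersurfaceHilbert r d (D + 1) - hypersurfaceHilbert (r + 1) d D) < (1 + ε) * Y := by
  set a : ℝ := d / (r !) - d / (r + 1)!
  have ha : 0 < a := by
    refine sub_pos.2 (div_lt_div_of_pos_left (by positivity) (by positivity) ?_)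
    exact_mod_cast (Nat.factorial_lt (Nat.pos_of_ne_zero hr)).2 r.lt_succ_self
  obtain ⟨η, haη, hηa⟩ := exists_between (div_lt_self ha (lt_add_of_pos_right 1 hε))
  have hlim := ((tendsto_log_factorial_hypersurfaceHilbert hr hd).div_const (Real.log 2)).add
    ((tendsto_hypersurfaceHilbert_succ_div_pow r d).sub
      (tendsto_hypersurfaceHilbert_div_pow (r + 1) d one_pos (tendsto_natCast_add_div_self 0)))
  have hdiv := (Finset.eventually_all (Finset.Icc 1 d)).2 fun μ hμ =>
    eventually_lt_sum_sub_hypersurfaceHilbert hr hd (by grind : μ ≠ 0) hηa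
  have hlimit : 0 / Real.log 2 + (d / (r !) - d * (1 ^ (r + 1) / (r + 1)!)) < (1 + ε) * η := by
    rw [div_lt_iff₀' (by positivity)] at haη
    rwa [zero_div, zero_add, one_pow, mul_one_div]
  obtain ⟨D, hND, hsum, hD, hD0⟩ :=
    (((tendsto_hypersurfaceHilbert_succ_atTop hr hd).eventually_gt_atTop N₀).and
      (hdiv.and ((hlim.eventually_lt_const hlimit).and (eventually_gt_atTop 0)))).exists
  have hpow : (0 : ℝ) < D ^ (r + 1) := by positivity
  have hη : 0 < η := (div_pos ha (by positivity)).trans haη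
  refine ⟨D, hND, η * D ^ (r + 1), by positivity, _, hsum, ?_⟩
  rw [← mul_assoc, ← div_lt_iff₀ hpow]
  refine hD.trans_eq' ?_
  rw [Real.logb, pow_succ (D : ℝ) r, add_zero]
  field_simp

end Asymptotics

section Determinants

lemma pow_dvd_alternatingMap {R M ι Γ : Type*} [CommRing R] [AddCommGroup M] [Module R M]
    [Fintype ι] [Finite Γ] (f : M [⋀^ι]→ₗ[R] R) (π : R) (w : Γ → ℕ) (y : Γ → M) {x : ι → M}
    (hx : ∀ j, x j ∈ Submodule.span R (Set.range fun c => π ^ w c • y c)) {A : ℕ}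
    (hA : ∀ s : ι → Γ, Function.Injective s → A ≤ ∑ j, w (s j)) :
    π ^ A ∣ f x := by
  classical
  have := Fintype.ofFinite Γ
  simp only [Submodule.mem_span_range_iff_exists_fun] at hx
  choose c hc using hx
  rw [← funext hc, ← AlternatingMap.coe_multilinearMap, MultilinearMap.map_sum]
  refine Finset.dvd_sum fun s _ => ?_
  simp only [MultilinearMap.map_smul_univ, Finset.prod_pow_eq_pow_sum, smul_eq_mul]
  refine Dvd.dvd.mul_left ?_ _
  by_cases hs : Function.Injective s
  · exact (pow_dvd_pow π (hA s hs)).mul_right _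
  · rw [Function.not_injective_iff] at hs
    obtain ⟨i, j, hij, hne⟩ := hs
    rw [AlternatingMap.coe_multilinearMap, f.map_eq_zero_of_eq _ (congrArg y hij) hne, mul_zero]
    exact dvd_zero _

lemma abv_det_le_factorial_mul_prod {R S n : Type*} [CommRing R] [Nontrivial R] [CommRing S]
    [LinearOrder S] [IsStrictOrderedRing S] [Fintype n] [DecidableEq n] (abv : AbsoluteValue R S)
    {A : Matrix n n R} {b : n → S} (hb : ∀ i j, abv (A i j) ≤ b j) :
    abv A.det ≤ (Fintype.card n).factorial * ∏ j, b j := calc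
  abv A.det = abv (∑ σ : Equiv.Perm n, Equiv.Perm.sign σ • ∏ j, A (σ j) j) := by
    rw [Matrix.det_apply]
  _ ≤ ∑ σ : Equiv.Perm n, abv (Equiv.Perm.sign σ • ∏ j, A (σ j) j) := abv.sum_le _ _
  _ = ∑ σ : Equiv.Perm n, ∏ j, abv (A (σ j) j) :=
    Finset.sum_congr rfl fun σ _ => by rw [abv.map_units_int_smul, map_prod]
  _ ≤ ∑ _σ : Equiv.Perm n, ∏ j, b j := by gcongr; exact hb _ _
  _ = (Fintype.card n).factorial * ∏ j, b j := by
    rw [Finset.sum_const, Finset.card_univ, Fintype.card_perm, nsmul_eq_mul]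

lemma span_ne_top_of_det_eq_zero {K ι : Type*} [Field K] [Fintype ι] [DecidableEq ι]
    {S : Set (ι → K)}
    (hdet : ∀ y : ι → ι → K, (∀ i, y i ∈ S) → (Matrix.of y).det = 0) :
    Submodule.span K S ≠ ⊤ := by
  intro htop
  obtain ⟨f, hfS, -, hf⟩ := Submodule.exists_fun_fin_finrank_span_eq K S
  have hcard : Fintype.card ι = Module.finrank K (Submodule.span K S) := by
    rw [htop, finrank_top, Module.finrank_fintype_fun_eq_card]
  let e := Fintype.equivFinOfCardEq hcard
  have hunit : IsUnit (Matrix.of (f ∘ e)) :=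
    Matrix.linearIndependent_rows_iff_isUnit.1 (hf.comp e e.injective)
  exact ((Matrix.isUnit_iff_isUnit_det _).1 hunit).ne_zero (hdet _ fun i => hfS (e i))

lemma exists_ne_zero_dotProduct_eq_zero_of_det_eq_zero {K ι : Type*} [Field K] [Fintype ι]
    [DecidableEq ι] {S : Set (ι → K)}
    (hdet : ∀ y : ι → ι → K, (∀ i, y i ∈ S) → (Matrix.of y).det = 0) :
    ∃ c : ι → K, c ≠ 0 ∧ ∀ y ∈ S, y ⬝ᵥ c = 0 := by
  obtain ⟨f, hf, hSf⟩ := Submodule.exists_le_ker_of_lt_top _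
    (span_ne_top_of_det_eq_zero hdet).lt_top
  have hf_apply (y : ι → K) : f y = y ⬝ᵥ fun i => f (Pi.single i 1) := by
    conv_lhs => rw [← (Pi.basisFun K ι).sum_repr y]
    simp [dotProduct]
  refine ⟨fun i => f (Pi.single i 1), fun h => hf (LinearMap.ext fun y => ?_), fun y hy => ?_⟩
  · rw [hf_apply, h, dotProduct_zero, LinearMap.zero_apply]
  · rw [← hf_apply]
    exact hSf (Submodule.subset_span hy)

/-- The generalized Vandermonde matrix of the values at the points `x i` of the monomials with
exponents in `E`. Its rows are indexed by `E` as well, to make it square. -/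
noncomputable def monomialMatrix {R σ : Type*} [CommRing R] (E : Finset (σ →₀ ℕ))
    (x : E → σ → R) : Matrix E E R :=
  Matrix.of fun i a => eval (x i) (monomial (a : σ →₀ ℕ) 1)

lemma exists_support_subset_eval_eq_zero {K σ : Type*} [Field K] [DecidableEq σ]
    {E : Finset (σ →₀ ℕ)} {T : Set (σ → K)}
    (hdet : ∀ x : E → σ → K, (∀ i, x i ∈ T) → (monomialMatrix E x).det = 0) :
    ∃ g : MvPolynomial σ K, g ≠ 0 ∧ g.support ⊆ E ∧ ∀ x ∈ T, eval x g = 0 := by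
  obtain ⟨c, hc, hcT⟩ := exists_ne_zero_dotProduct_eq_zero_of_det_eq_zero
    (S := (fun x (a : E) => eval x (monomial (a : σ →₀ ℕ) (1 : K))) '' T) fun y hy => by
      choose x hxT hxy using hy
      rw [← funext hxy]
      exact hdet x hxT
  have hcoeff (b : σ →₀ ℕ) : coeff b (∑ a : E, monomial (a : σ →₀ ℕ) (c a)) =
      if hb : b ∈ E then c ⟨b, hb⟩ else 0 := by
    simp only [coeff_sum, coeff_monomial]
    split_ifs with hb
    · rw [Fintype.sum_eq_single ⟨b, hb⟩ fun a ha => if_neg fun h => ha (Subtype.ext h), if_pos rfl]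
    · exact Finset.sum_eq_zero fun a _ => if_neg fun h : (a : σ →₀ ℕ) = b => hb (h ▸ a.2)
  refine ⟨∑ a : E, monomial (a : σ →₀ ℕ) (c a), fun h => hc (funext fun a => ?_), fun b hb => ?_,
    fun x hx => ?_⟩
  · have ha := congrArg (coeff (a : σ →₀ ℕ)) h
    rwa [hcoeff, dif_pos a.2, coeff_zero] at ha
  · by_contra hbE
    rw [mem_support_iff, hcoeff, dif_neg hbE] at hb
    exact hb rfl
  · rw [map_sum, ← hcT _ (Set.mem_image_of_mem _ hx), dotProduct]
    refine Finset.sum_congr rfl fun a _ => ?_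
    rw [eval_monomial, eval_monomial, one_mul, mul_comm]

end Determinants

section LocalGenerators

open Pointwise

lemma le_sup_pow_smul {R M : Type*} [CommRing R] [AddCommGroup M] [Module R M] {π : R}
    {N P : Submodule R M} (h : P ≤ N ⊔ π • P) (k : ℕ) : P ≤ N ⊔ π ^ k • P := by
  induction k with
  | zero => rw [pow_zero, one_smul]; exact le_sup_right
  | succ k ih => calc
      P ≤ N ⊔ π ^ k • P := ih
      _ ≤ N ⊔ π ^ k • (N ⊔ π • P) := sup_le_sup_left (Submodule.map_mono h) N
      _ = N ⊔ π ^ k • N ⊔ π ^ (k + 1) • P := by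
        rw [Submodule.smul_sup', smul_smul, ← pow_succ, sup_assoc]
      _ = N ⊔ π ^ (k + 1) • P := by
        rw [sup_eq_left.2 (Submodule.smul_le_self_of_tower (π ^ k) N)]

variable {R M σ : Type*} [CommRing R] [AddCommGroup M] [Module R M] (m : MonomialOrder σ)
  {π : R} {g : MvPolynomial σ R} {l : σ →₀ ℕ} {φ : MvPolynomial σ R →ₗ[R] M}

lemma map_monomial_add_mem_of_lt_mem (hl : IsCoprime π (coeff l g))
    (hlt : ∀ b, m.toSyn b < m.toSyn l → π ∣ coeff b g) (hφ : ∀ q, φ (q * g) = 0)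
    {Q : Submodule R M} (hQ : ∀ q, π • φ q ∈ Q) {e : σ →₀ ℕ}
    (hgt : ∀ b, m.toSyn (l + e) < m.toSyn b → φ (monomial b 1) ∈ Q) :
    φ (monomial (l + e) 1) ∈ Q := by
  classical
  have hterm (b : σ →₀ ℕ) (hb : b ≠ l) : coeff b g • φ (monomial (b + e) 1) ∈ Q := by
    rcases (m.toSyn.injective.ne hb).lt_or_gt with hbl | hlb
    · obtain ⟨z, hz⟩ := hlt b hbl
      rw [hz, mul_smul, ← map_smul φ z]
      exact hQ _
    · refine Q.smul_mem _ (hgt _ ?_)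
      rw [map_add, map_add]
      exact add_lt_add_left hlb _
  have hexpand : φ (monomial e 1 * g) = ∑ b ∈ insert l g.support,
      coeff b g • φ (monomial (b + e) 1) := by
    conv_lhs => rw [g.as_sum, Finset.mul_sum, map_sum]
    rw [Finset.sum_insert_of_eq_zero_if_notMem fun h => by rw [notMem_support_iff.1 h, zero_smul]]
    refine Finset.sum_congr rfl fun b _ => ?_
    rw [monomial_mul, one_mul, add_comm e b, ← map_smul, smul_monomial, smul_eq_mul, mul_one]
  have hlead : coeff l g • φ (monomial (l + e) 1) ∈ Q := by
    rw [hφ, ← Finset.add_sum_erase _ _ (Finset.mem_insert_self _ _)] at hexpand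
    rw [eq_neg_of_add_eq_zero_left hexpand.symm]
    exact Q.neg_mem (Q.sum_mem fun b hb => hterm b (Finset.ne_of_mem_erase hb))
  obtain ⟨x, y, hxy⟩ := hl
  have hcombine := Q.add_mem (Q.smul_mem x (hQ (monomial (l + e) 1))) (Q.smul_mem y hlead)
  rwa [smul_smul, smul_smul, ← add_smul, hxy, one_smul] at hcombine

-- Modulo `π` the lowest term of `g` is a unit multiple of `X ^ l`, so a monomial divisible by
-- `X ^ l` can be traded for higher ones; the errors divisible by `π` are absorbed as in Nakayama's
-- lemma.
lemma range_le_of_standard_mem (hl : IsCoprime π (coeff l g))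
    (hlt : ∀ b, m.toSyn b < m.toSyn l → π ∣ coeff b g) (hφ : ∀ q, φ (q * g) = 0)
    {N : Submodule R M} (hstd : ∀ a, ¬ l ≤ a → φ (monomial a 1) ∈ N)
    (hfin : {a | φ (monomial a 1) ∉ N}.Finite) {K : ℕ} (hK : ∀ q, π ^ K • φ q ∈ N) :
    LinearMap.range φ ≤ N := by
  set P := LinearMap.range φ
  have hmonomial (a : σ →₀ ℕ) : φ (monomial a 1) ∈ N ⊔ π • P := by
    by_contra ha
    have hbad : {a | φ (monomial a 1) ∉ N ⊔ π • P}.Finite :=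
      hfin.subset fun a ha haN => ha (Submodule.mem_sup_left haN)
    obtain ⟨a, ha, hmax⟩ := hbad.exists_maximalFor m.toSyn _ ⟨a, ha⟩
    by_cases hla : l ≤ a
    · obtain ⟨e, rfl⟩ := exists_add_of_le hla
      refine ha (map_monomial_add_mem_of_lt_mem m hl hlt hφ (fun q => ?_) fun b hb => ?_)
      · exact Submodule.mem_sup_right (Submodule.smul_mem_pointwise_smul _ _ _ ⟨q, rfl⟩)
      · by_contra hbQ
        exact hb.not_ge (hmax hbQ hb.le)
    · exact ha (Submodule.mem_sup_left (hstd a hla))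
  have hP : P ≤ N ⊔ π • P := by
    rintro _ ⟨q, rfl⟩
    rw [q.as_sum, map_sum]
    refine Submodule.sum_mem _ fun b _ => ?_
    rw [← mul_one (coeff b q), ← smul_eq_mul, ← smul_monomial, map_smul]
    exact Submodule.smul_mem _ _ (hmonomial b)
  refine (le_sup_pow_smul hP K).trans (sup_le le_rfl ?_)
  rintro _ ⟨_, ⟨q, rfl⟩, rfl⟩
  exact hK q

end LocalGenerators

section LocalDivisibility

lemma pow_degree_dvd_eval_monomial {R σ : Type*} [CommRing R] {π : R} {x : σ → R}
    (hx : ∀ s, π ∣ x s) (a : σ →₀ ℕ) : π ^ a.degree ∣ eval x (monomial a 1) := by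
  rw [eval_monomial, one_mul, Finsupp.degree_apply, ← Finset.prod_pow_eq_pow_sum]
  exact Finset.prod_dvd_prod_of_dvd _ _ fun s _ => pow_dvd_pow_of_dvd (hx s) _

variable {σ ι : Type*} [Fintype σ] [DecidableEq σ] [Fintype ι]

lemma sum_card_sub_card_standardExponents_le (l : σ →₀ ℕ) (K : ℕ)
    {s : ι → standardExponents l K ⊕ ι} (hs : Function.Injective s) :
    ∑ k ∈ Finset.Icc 1 K, (Fintype.card ι - (standardExponents l k).card) ≤
      ∑ j, Sum.elim (fun a : standardExponents l K => (a : σ →₀ ℕ).degree) (fun _ => K) (s j) := by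
  refine sum_card_sub_le_sum _ K _ fun k hk => ?_
  have inl_of_lt (c : standardExponents l K ⊕ ι)
      (hc : Sum.elim (fun a : standardExponents l K => (a : σ →₀ ℕ).degree) (fun _ => K) c < k) :
      ∃ a, c = Sum.inl a ∧ (a : σ →₀ ℕ).degree < k := by
    rcases c with a | i
    · exact ⟨a, rfl, hc⟩
    · exact absurd hc (Finset.mem_Icc.1 hk).2.not_gt
  refine Finset.card_le_card_of_injOn
    (fun j => Sum.elim (fun a : standardExponents l K => (a : σ →₀ ℕ)) 0 (s j))
    (fun j hj => ?_) fun j hj j' hj' hjj' => hs ?_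
  · obtain ⟨a, hja, ha⟩ := inl_of_lt (s j) (by simpa using hj)
    simpa [hja, mem_standardExponents, ha] using (mem_standardExponents.1 a.2).2
  · obtain ⟨a, hja, -⟩ := inl_of_lt (s j) (by simpa using hj)
    obtain ⟨a', hja', -⟩ := inl_of_lt (s j') (by simpa using hj')
    simp only [hja, hja', Sum.elim_inl] at hjj'
    rw [hja, hja', Subtype.ext hjj']

variable {R : Type*} [CommRing R] [DecidableEq ι]

lemma pow_dvd_det_of_monomial_eq_smul (m : MonomialOrder σ) {π : R} {g : MvPolynomial σ R}
    {l : σ →₀ ℕ} (hl : IsCoprime π (coeff l g))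
    (hlt : ∀ b, m.toSyn b < m.toSyn l → π ∣ coeff b g) {φ : MvPolynomial σ R →ₗ[R] ι → R}
    (hφ : ∀ q, φ (q * g) = 0) {y : (σ →₀ ℕ) → ι → R}
    (hy : ∀ a, φ (monomial a 1) = π ^ a.degree • y a) (h : ι → MvPolynomial σ R) (K : ℕ) :
    π ^ (∑ k ∈ Finset.Icc 1 K, (Fintype.card ι - (standardExponents l k).card)) ∣
      (Matrix.of fun j => φ (h j)).det := by
  let w : standardExponents l K ⊕ ι → ℕ := Sum.elim (fun a => (a : σ →₀ ℕ).degree) fun _ => K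
  let z : standardExponents l K ⊕ ι → ι → R := Sum.elim (fun a => y a) fun i => Pi.single i 1
  set N := Submodule.span R (Set.range fun c => π ^ w c • z c)
  have hpow (u : ι → R) : π ^ K • u ∈ N := by
    rw [← (Pi.basisFun R ι).sum_repr u, Finset.smul_sum]
    refine N.sum_mem fun i _ => ?_
    rw [smul_comm, Pi.basisFun_apply]
    exact N.smul_mem _ (Submodule.subset_span ⟨Sum.inr i, rfl⟩)
  have hdegree (a : σ →₀ ℕ) (ha : K ≤ a.degree) : φ (monomial a 1) ∈ N := by
    rw [hy, ← Nat.add_sub_cancel' ha, pow_add, mul_smul]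
    exact hpow _
  have hstd (a : σ →₀ ℕ) (hla : ¬ l ≤ a) : φ (monomial a 1) ∈ N := by
    rcases lt_or_ge a.degree K with ha | ha
    · rw [hy]
      exact Submodule.subset_span ⟨Sum.inl ⟨a, mem_standardExponents.2 ⟨ha, hla⟩⟩, rfl⟩
    · exact hdegree a ha
  have hfinite : {a | φ (monomial a 1) ∉ N}.Finite :=
    (exponentsLT σ K).finite_toSet.subset fun a ha =>
      mem_exponentsLT.2 (not_le.1 fun haK => ha (hdegree a haK))
  have hrange : LinearMap.range φ ≤ N :=
    range_le_of_standard_mem m hl hlt hφ hstd hfinite fun q => hpow _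
  exact pow_dvd_alternatingMap Matrix.detRowAlternating π w z (fun j => hrange ⟨h j, rfl⟩)
    fun s hs => sum_card_sub_card_standardExponents_le l K hs

lemma pow_dvd_det_eval (m : MonomialOrder σ) {π : R} {g : MvPolynomial σ R}
    {l : σ →₀ ℕ} (hl : IsCoprime π (coeff l g))
    (hlt : ∀ b, m.toSyn b < m.toSyn l → π ∣ coeff b g) {x : ι → σ → R} (hx : ∀ i s, π ∣ x i s)
    (hxg : ∀ i, eval (x i) g = 0) (h : ι → MvPolynomial σ R) (K : ℕ) :
    π ^ (∑ k ∈ Finset.Icc 1 K, (Fintype.card ι - (standardExponents l k).card)) ∣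
      (Matrix.of fun j i => eval (x i) (h j)).det := by
  choose y hy using fun a i => pow_degree_dvd_eval_monomial (hx i) a
  refine pow_dvd_det_of_monomial_eq_smul m hl hlt (y := y)
    (φ := LinearMap.pi fun i => (aeval (x i)).toLinearMap) (fun q => funext fun i => ?_)
    (fun a => funext fun i => ?_) h K
  · simp [aeval_eq_eval, hxg]
  · simp [aeval_eq_eval, hy]

end LocalDivisibility

section Dehomogenization

variable {R : Type*} [CommRing R] {n : ℕ}

lemma degree_eq_apply_zero_add_degree_tail (m : Fin (n + 1) →₀ ℕ) :
    m.degree = m 0 + m.tail.degree := by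
  simp only [Finsupp.degree_eq_sum, Fin.sum_univ_succ, Finsupp.tail_apply]

lemma eq_of_degree_eq_of_tail_eq {m m' : Fin (n + 1) →₀ ℕ} (hdegree : m.degree = m'.degree)
    (htail : m.tail = m'.tail) : m = m' := by
  rw [degree_eq_apply_zero_add_degree_tail, degree_eq_apply_zero_add_degree_tail m',
    htail] at hdegree
  rw [← m.cons_tail, ← m'.cons_tail, htail, Nat.add_right_cancel hdegree]

/-- The restriction of a form to the affine chart in which the coordinate `X 0` is `1`. -/
noncomputable def dehomogenize : MvPolynomial (Fin (n + 1)) R →ₐ[R] MvPolynomial (Fin n) R :=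
  aeval (Fin.cons 1 X : Fin (n + 1) → MvPolynomial (Fin n) R)

/-- The form of degree `D` whose restriction to the affine chart in which `X 0` is `1` is `g`.
If `D` is less than the total degree of `g`, the result is not homogeneous. -/
noncomputable def homogenize (D : ℕ) (g : MvPolynomial (Fin n) R) : MvPolynomial (Fin (n + 1)) R :=
  ∑ b ∈ g.support, monomial (Finsupp.cons (D - b.degree) b) (coeff b g)

lemma dehomogenize_monomial (m : Fin (n + 1) →₀ ℕ) (c : R) :
    dehomogenize (monomial m c) = monomial m.tail c := by
  rw [dehomogenize, aeval_monomial, Finsupp.prod_fintype _ _ fun _ => pow_zero _,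
    Fin.prod_univ_succ, monomial_eq, Finsupp.prod_fintype _ _ fun _ => pow_zero _]
  simp [algebraMap_eq, Finsupp.tail_apply]

lemma dehomogenize_homogenize (D : ℕ) (g : MvPolynomial (Fin n) R) :
    dehomogenize (homogenize D g) = g := by
  simp only [homogenize, map_sum, dehomogenize_monomial, Finsupp.tail_cons,
    support_sum_monomial_coeff]

lemma isHomogeneous_homogenize {D : ℕ} {g : MvPolynomial (Fin n) R}
    (hg : ∀ b ∈ g.support, b.degree ≤ D) : (homogenize D g).IsHomogeneous D := by
  refine IsHomogeneous.sum _ _ _ fun b hb => isHomogeneous_monomial _ ?_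
  rw [degree_eq_apply_zero_add_degree_tail, Finsupp.cons_zero, Finsupp.tail_cons,
    Nat.sub_add_cancel (hg b hb)]

lemma eval_dehomogenize (x : Fin n → R) (F : MvPolynomial (Fin (n + 1)) R) :
    eval x (dehomogenize F) = eval (Fin.cons 1 x : Fin (n + 1) → R) F := by
  simp only [← coe_aeval_eq_eval, RingHom.coe_coe, dehomogenize]
  rw [← AlgHom.comp_apply, comp_aeval]
  congr 2
  funext i
  cases i using Fin.cases <;> simp

lemma map_dehomogenize {S : Type*} [CommRing S] (f : R →+* S) (F : MvPolynomial (Fin (n + 1)) R) :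
    map f (dehomogenize F) = dehomogenize (map f F) := by
  induction F using MvPolynomial.induction_on' with
  | monomial m c => simp only [map_monomial, dehomogenize_monomial]
  | add F G hF hG => simp only [map_add, hF, hG]

lemma coeff_tail_dehomogenize {d : ℕ} {F : MvPolynomial (Fin (n + 1)) R} (hF : F.IsHomogeneous d)
    {m : Fin (n + 1) →₀ ℕ} (hm : m.degree = d) : coeff m.tail (dehomogenize F) = coeff m F := by
  classical
  conv_lhs => rw [F.as_sum, map_sum, coeff_sum]
  simp only [dehomogenize_monomial, coeff_monomial]
  have htail (b : Fin (n + 1) →₀ ℕ) (hb : b ∈ F.support) : b.tail = m.tail ↔ b = m :=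
    ⟨eq_of_degree_eq_of_tail_eq ((hF.degree_eq_sum_deg_support hb).symm.trans hm.symm),
      congrArg _⟩
  rw [Finset.sum_congr rfl fun b hb => if_congr (htail b hb) rfl rfl, Finset.sum_ite_eq',
    ite_eq_left_iff]
  exact fun hmF => (notMem_support_iff.1 hmF).symm

lemma exists_mem_support_apply_eq_zero_of_not_X_dvd {σ : Type*} {F : MvPolynomial σ R} {s : σ}
    (hF : ¬ X s ∣ F) : ∃ m ∈ F.support, m s = 0 := by
  by_contra! hcon
  refine hF ?_
  rw [F.as_sum]
  exact Finset.dvd_sum fun m hm => X_dvd_monomial.2 (Or.inr (hcon m hm))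

lemma totalDegree_dehomogenize {d : ℕ} {F : MvPolynomial (Fin (n + 1)) R}
    (hF : F.IsHomogeneous d) (hX : ¬ X 0 ∣ F) : (dehomogenize F).totalDegree = d := by
  refine le_antisymm ?_ ?_
  · rw [F.as_sum, map_sum]
    refine totalDegree_finsetSum_le fun m hm => ?_
    rw [dehomogenize_monomial]
    have hmd : m.degree = d := (hF.degree_eq_sum_deg_support hm).symm
    rw [← hmd, degree_eq_apply_zero_add_degree_tail]
    exact (totalDegree_monomial_le _ _).trans le_add_self
  · obtain ⟨m, hm, hm0⟩ := exists_mem_support_apply_eq_zero_of_not_X_dvd hX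
    have hmd : m.degree = d := (hF.degree_eq_sum_deg_support hm).symm
    have htail : m.tail ∈ (dehomogenize F).support := by
      rw [mem_support_iff, coeff_tail_dehomogenize hF hmd]
      exact mem_support_iff.1 hm
    rw [← hmd, degree_eq_apply_zero_add_degree_tail, hm0, zero_add]
    exact le_totalDegree htail

lemma not_dvd_of_forall_not_degree_le {σ : Type*} [NoZeroDivisors R] (m : MonomialOrder σ)
    {f g : MvPolynomial σ R} (hg : g ≠ 0) (hfg : ∀ b ∈ g.support, ¬ m.degree f ≤ b) : ¬ f ∣ g := by
  rintro ⟨q, rfl⟩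
  refine hfg _ (m.degree_mem_support hg) ?_
  rw [m.degree_mul' hg]
  exact le_self_add

end Dehomogenization

section Multiplicity

variable {R : Type*} [CommRing R]

/-- The Taylor shift `F(a + X)` of a polynomial `F`. -/
noncomputable def taylorShift {σ : Type*} (a : σ → R) : MvPolynomial σ R →ₐ[R] MvPolynomial σ R :=
  bind₁ fun i => C (a i) + X i

lemma eval_taylorShift {σ : Type*} (a x : σ → R) (F : MvPolynomial σ R) :
    eval x (taylorShift a F) = eval (a + x) F := by
  simp only [← coe_aeval_eq_eval, RingHom.coe_coe, taylorShift]
  rw [aeval_bind₁]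
  congr 2
  funext i
  simp

lemma map_taylorShift {σ S : Type*} [CommRing S] (f : R →+* S) (a : σ → R) (F : MvPolynomial σ R) :
    map f (taylorShift a F) = taylorShift (f ∘ a) (map f F) := by
  rw [taylorShift, map_bind₁]
  simp [taylorShift]

lemma totalDegree_taylorShift_le {σ : Type*} (a : σ → R) (F : MvPolynomial σ R) :
    (taylorShift a F).totalDegree ≤ F.totalDegree := by
  rw [taylorShift, F.as_sum, map_sum, ← F.as_sum]
  refine totalDegree_finsetSum_le fun m hm => (le_totalDegree hm).trans' ?_
  have hlinear (i : σ) : (C (a i) + X i).totalDegree ≤ 1 :=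
    (totalDegree_add _ _).trans (max_le (by simp) ((totalDegree_monomial_le _ _).trans (by simp)))
  rw [bind₁_monomial]
  calc (C (coeff m F) * ∏ i ∈ m.support, (C (a i) + X i) ^ m i).totalDegree
      ≤ 0 + ∑ i ∈ m.support, ((C (a i) + X i) ^ m i).totalDegree :=
        (totalDegree_mul _ _).trans
          (add_le_add (totalDegree_C _).le (totalDegree_finsetProd _ _))
    _ ≤ ∑ i ∈ m.support, m i := by
        rw [zero_add]
        refine Finset.sum_le_sum fun i _ => (totalDegree_pow _ _).trans ?_
        exact (Nat.mul_le_mul_left _ (hlinear i)).trans (mul_one _).le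

lemma le_of_homogeneousComponent_taylorShift_ne_zero {σ : Type*} {d μ : ℕ} {F : MvPolynomial σ R}
    (hF : F.IsHomogeneous d) {a : σ → R} (hμ : homogeneousComponent μ (taylorShift a F) ≠ 0) :
    μ ≤ d := by
  by_contra! hcon
  refine hμ (homogeneousComponent_eq_zero _ _ ?_)
  exact ((totalDegree_taylorShift_le a F).trans hF.totalDegree_le).trans_lt hcon

variable {n : ℕ}

/-- The linear change of coordinates `X j ↦ X j + a j * X 0` for `j ≠ 0`. -/
noncomputable def shear (a : Fin n → R) :
    MvPolynomial (Fin (n + 1)) R →ₐ[R] MvPolynomial (Fin (n + 1)) R :=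
  aeval (Fin.cons (X 0) fun j => X j.succ + C (a j) * X 0 : Fin (n + 1) → _)

lemma isHomogeneous_shear (a : Fin n → R) {d : ℕ} {F : MvPolynomial (Fin (n + 1)) R}
    (hF : F.IsHomogeneous d) : (shear a F).IsHomogeneous d := by
  rw [← one_mul d]
  refine hF.aeval _ fun i => ?_
  cases i using Fin.cases with
  | zero => exact isHomogeneous_X _ _
  | succ j => exact (isHomogeneous_X _ _).add (isHomogeneous_C_mul_X _ _)

lemma dehomogenize_shear (a : Fin n → R) (F : MvPolynomial (Fin (n + 1)) R) :
    dehomogenize (shear a F) = taylorShift a (dehomogenize F) := by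
  rw [← AlgHom.comp_apply, ← AlgHom.comp_apply]
  congr 1
  ext1 i
  cases i using Fin.cases <;> simp [dehomogenize, shear, taylorShift, add_comm, algebraMap_eq]

lemma taylorShift_eq_aeval_shear {v : Fin (n + 1) → R} {a : Fin n → R}
    (hv : ∀ j, v j.succ = a j * v 0) (F : MvPolynomial (Fin (n + 1)) R) :
    taylorShift v F = aeval (Fin.cons (C (v 0) + X 0) fun j => X j.succ - C (a j) * X 0 :
      Fin (n + 1) → MvPolynomial (Fin (n + 1)) R) (shear a F) := by
  rw [← AlgHom.comp_apply]
  congr 1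
  ext1 i
  cases i using Fin.cases with
  | zero => simp [taylorShift, shear]
  | succ j =>
    simp only [taylorShift, shear, bind₁_X_right, AlgHom.comp_apply, aeval_X, Fin.cons_succ,
      map_add, map_mul, Fin.cons_zero, algHom_C, algebraMap_eq, hv]
    ring

lemma aeval_cons_mem_pow {S : Type*} [CommRing S] [Algebra R S] {I : Ideal S} (s : S)
    {y : Fin n → S} (hy : ∀ j, y j ∈ I) {k : ℕ} {F : MvPolynomial (Fin (n + 1)) R}
    (hF : ∀ m ∈ F.support, k ≤ m.tail.degree) :
    aeval (Fin.cons s y : Fin (n + 1) → S) F ∈ I ^ k := by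
  rw [F.as_sum, map_sum]
  refine Ideal.sum_mem _ fun m hm => Ideal.pow_le_pow_right (hF m hm) ?_
  rw [aeval_monomial, Finsupp.prod_fintype _ _ fun _ => pow_zero _, Fin.prod_univ_succ,
    Finsupp.degree_eq_sum, ← Finset.prod_pow_eq_pow_sum]
  simp only [Fin.cons_succ]
  exact Ideal.mul_mem_left _ _ (Ideal.mul_mem_left _ _
    (Ideal.prod_mem_prod fun j _ => Ideal.pow_mem_pow (hy j) _))

-- Shearing moves `v` onto the line spanned by the `0`-th basis vector. There only the `X j` with
-- `j ≠ 0` vanish, so the order of vanishing is read off the exponents with the `0`-th one removed.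
lemma exists_coeff_taylorShift_dehomogenize_ne_zero {d μ : ℕ} {F : MvPolynomial (Fin (n + 1)) R}
    (hF : F.IsHomogeneous d) {v : Fin (n + 1) → R} {a : Fin n → R}
    (hv : ∀ j, v j.succ = a j * v 0) (hμ : homogeneousComponent μ (taylorShift v F) ≠ 0) :
    ∃ b, b.degree ≤ μ ∧ coeff b (taylorShift a (dehomogenize F)) ≠ 0 := by
  by_contra! hcon
  have hX (i : Fin (n + 1)) : X i ∈ idealOfVars (Fin (n + 1)) R := Ideal.subset_span ⟨i, rfl⟩
  have hshear : ∀ m ∈ (shear a F).support, μ + 1 ≤ m.tail.degree := fun m hm => by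
    by_contra! hlt
    have hmd : m.degree = d :=
      ((isHomogeneous_shear a hF).degree_eq_sum_deg_support hm).symm
    refine mem_support_iff.1 hm ?_
    rw [← coeff_tail_dehomogenize (isHomogeneous_shear a hF) hmd, dehomogenize_shear]
    exact hcon _ (Nat.lt_succ_iff.1 hlt)
  have hmem : taylorShift v F ∈ idealOfVars (Fin (n + 1)) R ^ (μ + 1) := by
    rw [taylorShift_eq_aeval_shear hv]
    exact aeval_cons_mem_pow _
      (fun j => Ideal.sub_mem _ (hX _) (Ideal.mul_mem_left _ _ (hX _))) hshear
  rw [mem_pow_idealOfVars_iff'] at hmem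
  refine hμ (ext _ _ fun b => ?_)
  rw [coeff_homogeneousComponent, coeff_zero, ite_eq_right_iff]
  exact fun hb => hmem b (by omega)

end Multiplicity

section Primes

lemma exists_isCoprime_coeff_and_forall_lt_dvd {σ : Type*} (m : MonomialOrder σ) {p : ℕ}
    (hp : p.Prime) {g : MvPolynomial σ ℤ} {c : σ →₀ ℕ}
    (hc : coeff c (map (Int.castRingHom (ZMod p)) g) ≠ 0) :
    ∃ l, m.toSyn l ≤ m.toSyn c ∧ IsCoprime (p : ℤ) (coeff l g) ∧
      ∀ b, m.toSyn b < m.toSyn l → (p : ℤ) ∣ coeff b g := by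
  have dvd_iff (b : σ →₀ ℕ) : (p : ℤ) ∣ coeff b g ↔
      b ∉ (map (Int.castRingHom (ZMod p)) g).support := by
    rw [notMem_support_iff, coeff_map, eq_intCast, ZMod.intCast_zmod_eq_zero_iff_dvd]
  obtain ⟨l, hl, hmin⟩ := Finset.exists_min_image _ m.toSyn ⟨c, mem_support_iff.2 hc⟩
  refine ⟨l, hmin c (mem_support_iff.2 hc), ?_, fun b hb => ?_⟩
  · rw [(Nat.prime_iff_prime_int.1 hp).coprime_iff_not_dvd, dvd_iff, not_not]
    exact hl
  · rw [dvd_iff]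
    exact fun hbs => (hmin b hbs).not_gt hb

lemma ReducesTo.dvd_sub {n p : ℕ} {v : Fin (n + 1) → ZMod p} {x a : Fin n → ℤ}
    (hx : ReducesTo p (Fin.cons 1 x) v) (hv : ∀ j, v j.succ = a j * v 0) (j : Fin n) :
    (p : ℤ) ∣ x j - a j := by
  obtain ⟨c, -, hc⟩ := hx
  have h0 : (1 : ZMod p) = c * v 0 := by simpa using congrFun hc 0
  have hj : (x j : ZMod p) = c * v j.succ := by simpa using congrFun hc j.succ
  rw [← ZMod.intCast_zmod_eq_zero_iff_dvd, Int.cast_sub, hj, hv, mul_left_comm, ← h0, mul_one,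
    sub_self]

lemma prime_pow_dvd_det_monomialMatrix {r d μ p : ℕ} (hp : p.Prime)
    {F : MvPolynomial (Fin (r + 1 + 1)) ℤ} (hF : F.IsHomogeneous d)
    {v : Fin (r + 1 + 1) → ZMod p} (hv0 : v 0 ≠ 0) (hμ : MultiplicityAt p F v μ)
    {E : Finset (Fin (r + 1) →₀ ℕ)} {x : E → Fin (r + 1) → ℤ}
    (hxF : ∀ i, eval (x i) (dehomogenize F) = 0) (hxv : ∀ i, ReducesTo p (Fin.cons 1 (x i)) v)
    (K : ℕ) :
    (p : ℤ) ^ (∑ k ∈ Finset.Icc 1 K, (E.card - hypersurfaceHilbert r μ k)) ∣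
      (monomialMatrix E x).det := by
  have : Fact p.Prime := ⟨hp⟩
  let a (j : Fin (r + 1)) : ℤ := (v j.succ / v 0).val
  have hv (j : Fin (r + 1)) : v j.succ = a j * v 0 := by
    rw [Int.cast_natCast, ZMod.natCast_zmod_val, div_mul_cancel₀ _ hv0]
  have eval_sub (i : E) (f : MvPolynomial (Fin (r + 1)) ℤ) :
      eval (x i - a) (taylorShift a f) = eval (x i) f := by
    rw [eval_taylorShift, add_sub_cancel]
  obtain ⟨c, hcμ, hc⟩ := exists_coeff_taylorShift_dehomogenize_ne_zero
    (hF.map (Int.castRingHom (ZMod p))) hv hμ.2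
  rw [← map_dehomogenize] at hc
  obtain ⟨l, hlc, hl, hlt⟩ := exists_isCoprime_coeff_and_forall_lt_dvd MonomialOrder.degLex hp
    (g := taylorShift a (dehomogenize F)) (by rwa [map_taylorShift])
  have hdvd := pow_dvd_det_eval MonomialOrder.degLex hl hlt (fun i => (hxv i).dvd_sub hv)
    (fun i => (eval_sub i _).trans (hxF i))
    (fun j : E => taylorShift a (monomial (j : Fin (r + 1) →₀ ℕ) 1)) K
  have hmatrix : (Matrix.of fun j i : E =>
      eval (fun s => x i s - a s) (taylorShift a (monomial (j : Fin (r + 1) →₀ ℕ) 1))) =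
      (monomialMatrix E x).transpose :=
    Matrix.ext fun j i => eval_sub i _
  rw [hmatrix, Matrix.det_transpose, Fintype.card_coe] at hdvd
  refine (pow_dvd_pow _ (Finset.sum_le_sum fun k _ => Nat.sub_le_sub_left ?_ _)).trans hdvd
  rw [card_standardExponents]
  exact hypersurfaceHilbert_mono r k ((Finsupp.DegLex.monotone_degree hlc).trans hcμ)

lemma prod_prime_pow_dvd {ι : Type*} [Fintype ι] {p : ι → ℕ} (hp : ∀ i, (p i).Prime)
    (hpinj : Function.Injective p) {A : ι → ℕ} {z : ℤ} (hz : ∀ i, (p i : ℤ) ^ A i ∣ z) :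
    ∏ i, (p i : ℤ) ^ A i ∣ z := by
  refine Finset.prod_dvd_of_coprime (fun i _ j _ hij => IsCoprime.pow ?_) fun i _ => hz i
  rw [Nat.isCoprime_iff_coprime]
  exact (Nat.coprime_primes (hp i) (hp j)).2 (hpinj.ne hij)

end Primes

section DeterminantVanishing

lemma map_det_monomialMatrix {R S σ : Type*} [CommRing R] [CommRing S] [DecidableEq σ]
    (f : R →+* S) {E : Finset (σ →₀ ℕ)} (x : E → σ → R) :
    f (monomialMatrix E x).det = (monomialMatrix E fun i => f ∘ x i).det := by
  rw [RingHom.map_det]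
  congr 1
  ext i a
  simp [monomialMatrix, eval_monomial, Finsupp.prod]

lemma abv_det_monomialMatrix_le {R S σ : Type*} [CommRing R] [Nontrivial R] [CommRing S]
    [LinearOrder S] [IsStrictOrderedRing S] [DecidableEq σ] (abv : AbsoluteValue R S)
    {E : Finset (σ →₀ ℕ)} {x : E → σ → R} {B : S} (hx : ∀ i s, abv (x i s) ≤ B) :
    abv (monomialMatrix E x).det ≤ E.card.factorial * B ^ ∑ a ∈ E, a.degree := by
  rw [← Finset.prod_pow_eq_pow_sum, ← Finset.prod_coe_sort E fun a => B ^ a.degree,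
    ← Fintype.card_coe]
  refine abv_det_le_factorial_mul_prod abv fun i a => ?_
  rw [monomialMatrix, Matrix.of_apply, eval_monomial, one_mul, Finsupp.prod, map_prod,
    Finsupp.degree_apply, ← Finset.prod_pow_eq_pow_sum]
  refine Finset.prod_le_prod (fun s _ => abv.nonneg _) fun s _ => ?_
  rw [map_pow]
  exact pow_le_pow_left₀ (abv.nonneg _) (hx i s) _

lemma det_monomialMatrix_eq_zero_of_abs_le_one {σ : Type*} [Fintype σ] [DecidableEq σ]
    {E : Finset (σ →₀ ℕ)} {x : E → σ → ℤ} (hx : ∀ i s, |x i s| ≤ 1)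
    (hE : 3 ^ Fintype.card σ < E.card) : (monomialMatrix E x).det = 0 := by
  obtain ⟨i, -, j, -, hij, hxij⟩ := Finset.exists_ne_map_eq_of_card_lt_of_maps_to
    (s := Finset.univ) (t := Fintype.piFinset fun _ : σ => Finset.Icc (-1 : ℤ) 1) (f := x)
    (by simpa using hE) fun i _ =>
      Fintype.mem_piFinset.2 fun s => Finset.mem_Icc.2 (abs_le.1 (hx i s))
  refine Matrix.det_zero_of_row_eq hij (funext fun a => ?_)
  simp only [monomialMatrix, Matrix.of_apply, hxij]

lemma mul_pow_lt_prod_pow {ι : Type*} [Fintype ι] {p : ι → ℕ} (hp : ∀ i, p i ≠ 0)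
    {A : ι → ℕ} {θ : ι → ℝ} {B ε Y : ℝ} {N S : ℕ} (hN : N ≠ 0) (hB : 2 ≤ B) (hY : 0 ≤ Y)
    (hprod : B ^ (1 + ε) ≤ ∏ i, (p i : ℝ) ^ θ i) (hA : ∀ i, θ i * Y ≤ A i)
    (hlt : Real.logb 2 N + S < (1 + ε) * Y) :
    N * B ^ S < ∏ i, (p i : ℝ) ^ A i := by
  have hN0 : 0 < (N : ℝ) := by positivity
  have hlogN : 0 ≤ Real.logb 2 N :=
    Real.logb_nonneg one_lt_two (Nat.one_le_cast.2 (Nat.pos_of_ne_zero hN))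
  calc N * B ^ S = (2 : ℝ) ^ Real.logb 2 N * B ^ (S : ℝ) := by
        rw [Real.rpow_logb two_pos (by norm_num) hN0, Real.rpow_natCast]
    _ ≤ B ^ Real.logb 2 N * B ^ (S : ℝ) := by gcongr
    _ = B ^ (Real.logb 2 N + S) := (Real.rpow_add (by linarith) _ _).symm
    _ < B ^ ((1 + ε) * Y) := Real.rpow_lt_rpow_of_exponent_lt (by linarith) hlt
    _ = (B ^ (1 + ε)) ^ Y := Real.rpow_mul (by linarith) _ _
    _ ≤ (∏ i, (p i : ℝ) ^ θ i) ^ Y := by gcongr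
    _ = ∏ i, (p i : ℝ) ^ (θ i * Y) := by
        rw [← Real.finsetProd_rpow _ _ fun i _ => by positivity]
        exact Finset.prod_congr rfl fun i _ => (Real.rpow_mul (Nat.cast_nonneg _) _ _).symm
    _ ≤ ∏ i, (p i : ℝ) ^ A i := by
        refine Finset.prod_le_prod (fun i _ => by positivity) fun i _ => ?_
        rw [← Real.rpow_natCast]
        have := Nat.one_le_cast (α := ℝ).2 (Nat.pos_of_ne_zero (hp i))
        gcongr
        exact hA i

lemma det_monomialMatrix_eq_zero_of_reducesTo {ι : Type*} [Fintype ι] {r d : ℕ}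
    {F : MvPolynomial (Fin (r + 1 + 1)) ℤ} (hF : F.IsHomogeneous d) {p : ι → ℕ}
    (hp : ∀ i, (p i).Prime) (hpinj : Function.Injective p)
    {v : (i : ι) → Fin (r + 1 + 1) → ZMod (p i)} (hv0 : ∀ i, v i 0 ≠ 0) {μ : ι → ℕ}
    (hμ : ∀ i, MultiplicityAt (p i) F (v i) (μ i)) {E : Finset (Fin (r + 1) →₀ ℕ)}
    {x : E → Fin (r + 1) → ℤ} (hxF : ∀ j, eval (x j) (dehomogenize F) = 0)
    (hxv : ∀ j i, ReducesTo (p i) (Fin.cons 1 (x j)) (v i)) {B : ℝ}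
    (hxB : ∀ j s, (|x j s| : ℝ) ≤ B) (hE : 3 ^ (r + 1) < E.card)
    {θ : ι → ℝ} {ε Y : ℝ} (hY : 0 ≤ Y) {K : ι → ℕ}
    (hprod : B ^ (1 + ε) ≤ ∏ i, (p i : ℝ) ^ θ i)
    (hK : ∀ i, θ i * Y ≤
      (∑ k ∈ Finset.Icc 1 (K i), (E.card - hypersurfaceHilbert r (μ i) k) : ℕ))
    (hlt : Real.logb 2 E.card.factorial + (∑ a ∈ E, a.degree : ℕ) < (1 + ε) * Y) :
    (monomialMatrix E x).det = 0 := by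
  by_contra hdet
  have hB : 2 ≤ B := by
    by_contra! hB
    refine hdet (det_monomialMatrix_eq_zero_of_abs_le_one (fun j s => ?_) (by simpa using hE))
    have habs_lt : (|x j s| : ℝ) < 2 := (hxB j s).trans_lt hB
    exact Int.lt_add_one_iff.1 (by exact_mod_cast habs_lt)
  have hdvd := prod_prime_pow_dvd hp hpinj fun i =>
    prime_pow_dvd_det_monomialMatrix (hp i) hF (hv0 i) (hμ i) hxF (hxv · i) (K i)
  have hlower := Int.le_of_dvd (abs_pos.2 hdet) ((dvd_abs _ _).2 hdvd)
  have hupper := abv_det_monomialMatrix_le AbsoluteValue.abs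
    (x := fun j => Int.castRingHom ℝ ∘ x j) hxB
  rw [← map_det_monomialMatrix, AbsoluteValue.abs_apply, eq_intCast] at hupper
  refine ((mul_pow_lt_prod_pow (fun i => (hp i).ne_zero) E.card.factorial_ne_zero hB hY hprod hK
    hlt).trans_le ?_).not_ge hupper
  exact_mod_cast hlower

end DeterminantVanishing

section AuxiliaryForm

lemma degree_map_of_injective {σ R S : Type*} [CommRing R] [CommRing S] (m : MonomialOrder σ)
    {f : R →+* S} (hf : Function.Injective f) (g : MvPolynomial σ R) :
    m.degree (map f g) = m.degree g := by
  rw [MonomialOrder.degree, MonomialOrder.degree, support_map_of_injective _ hf]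

lemma exists_isHomogeneous_not_dvd_eval_eq_zero {R K : Type*} [CommRing R] [Field K]
    {f : R →+* K} (hf : Function.Injective f) {n : ℕ} (F : MvPolynomial (Fin (n + 1)) R) (D : ℕ)
    {T : Set (Fin n → R)}
    (hdet : ∀ x : standardExponents (MonomialOrder.degLex.degree (dehomogenize F)) (D + 1) →
      Fin n → R, (∀ i, x i ∈ T) → (monomialMatrix _ x).det = 0) :
    ∃ G : MvPolynomial (Fin (n + 1)) K, G.IsHomogeneous D ∧ ¬ map f F ∣ G ∧
      ∀ x ∈ T, eval (Fin.cons 1 (f ∘ x) : Fin (n + 1) → K) G = 0 := by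
  obtain ⟨g, hg, hgE, hgT⟩ := exists_support_subset_eval_eq_zero
    (E := standardExponents (MonomialOrder.degLex.degree (dehomogenize F)) (D + 1))
    (T := (f ∘ ·) '' T) fun y hy => by
      choose x hxT hxy using hy
      rw [← funext hxy, ← map_det_monomialMatrix, hdet x hxT, map_zero]
  refine ⟨homogenize D g, isHomogeneous_homogenize fun b hb => ?_, fun hdvd => ?_, fun x hx => ?_⟩
  · exact Nat.lt_succ_iff.1 (mem_standardExponents.1 (hgE hb)).1
  · refine not_dvd_of_forall_not_degree_le MonomialOrder.degLex (f := dehomogenize (map f F)) hg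
      (fun b hb => ?_) ?_
    · rw [← map_dehomogenize, degree_map_of_injective _ hf]
      exact (mem_standardExponents.1 (hgE hb)).2
    · rw [← dehomogenize_homogenize D g]
      exact map_dvd _ hdvd
  · rw [← eval_dehomogenize, dehomogenize_homogenize]
    exact hgT _ (Set.mem_image_of_mem _ hx)

end AuxiliaryForm

theorem stmt_10_general (n d : ℕ) (hn : 2 ≤ n) (hd : 1 ≤ d) (ε : ℝ) (hε : 0 < ε) :
    ∃ C : ℕ, ∀ F : MvPolynomial (Fin (n + 1)) ℤ,
      F.IsHomogeneous d →
      ¬ (X 0 ∣ F) →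
      ∀ B : ℝ,
      ∀ t : ℕ, ∀ p : Fin t → ℕ, (∀ i, (p i).Prime) → Function.Injective p →
      ∀ v : (i : Fin t) → Fin (n + 1) → ZMod (p i), (∀ i, v i 0 ≠ 0) →
      ∀ μ : Fin t → ℕ, (∀ i, 1 ≤ μ i) → (∀ i, MultiplicityAt (p i) F (v i) (μ i)) →
      (∏ i, (p i : ℝ) ^ (((d : ℝ) / μ i) ^ ((1 : ℝ) / ((n : ℝ) - 1))) ≥ B ^ (1 + ε)) →
      ∃ G : MvPolynomial (Fin (n + 1)) ℚ, ∃ e ≤ C, G.IsHomogeneous e ∧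
        ¬ (MvPolynomial.map (Int.castRingHom ℚ) F ∣ G) ∧
        ∀ ξ : Fin (n + 1) → ℤ, ξ 0 = 1 →
          (∀ m, m ≠ 0 → (|ξ m| : ℝ) ≤ B) → eval ξ F = 0 →
          (∀ i, ReducesTo (p i) ξ (v i)) →
          eval (fun m => (ξ m : ℚ)) G = 0 := by
  obtain ⟨r, rfl⟩ : ∃ r, n = r + 1 := ⟨n - 1, by omega⟩
  obtain ⟨D, hD, Y, hY, K, hK, hlt⟩ :=
    exists_determinant_method_parameters (by omega : r ≠ 0) (by omega : d ≠ 0) hε (3 ^ (r + 1))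
  refine ⟨D, fun F hF hX B t p hp hpinj v hv0 μ hμ1 hμ hprod => ?_⟩
  rw [Nat.cast_add_one, add_sub_cancel_right] at hprod
  set E := standardExponents (MonomialOrder.degLex.degree (dehomogenize F)) (D + 1) with hE
  have hdegree : (MonomialOrder.degLex.degree (dehomogenize F)).degree = d := by
    rw [degree_degLexDegree, totalDegree_dehomogenize hF hX]
  have hcard : E.card = hypersurfaceHilbert r d (D + 1) := by
    rw [card_standardExponents, hdegree]
  have hsum : (∑ a ∈ E, a.degree : ℕ) + (hypersurfaceHilbert (r + 1) d D : ℝ) =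
      D * hypersurfaceHilbert r d (D + 1) := by
    rw [← hdegree, hE]
    exact_mod_cast sum_degree_standardExponents_add _ D
  obtain ⟨G, hG, hFG, hGT⟩ := exists_isHomogeneous_not_dvd_eval_eq_zero
    (f := Int.castRingHom ℚ) Int.cast_injective F D
    (T := {x | eval x (dehomogenize F) = 0 ∧ (∀ i, ReducesTo (p i) (Fin.cons 1 x) (v i)) ∧
      ∀ s, (|x s| : ℝ) ≤ B}) fun x hx => by
    refine det_monomialMatrix_eq_zero_of_reducesTo hF hp hpinj hv0 hμ (K := fun i => K (μ i))
      (fun j => (hx j).1) (fun j => (hx j).2.1) (fun j => (hx j).2.2) (by rwa [hcard]) hY hprod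
      (fun i => ?_) ?_
    · rw [hcard]
      have hμd : μ i ≤ d := le_of_homogeneousComponent_taylorShift_ne_zero (hF.map _) (hμ i).2
      exact hK _ (Finset.mem_Icc.2 ⟨hμ1 i, hμd⟩)
    · rwa [hcard, eq_sub_of_add_eq hsum]
  refine ⟨G, D, le_rfl, hG, hFG, fun ξ hξ0 hξB hξF hξv => ?_⟩
  rw [← Fin.cons_self_tail ξ, hξ0] at hξF hξv ⊢
  have hroot := hGT (Fin.tail ξ) ⟨(eval_dehomogenize _ _).trans hξF, hξv,
    fun s => hξB s.succ (Fin.succ_ne_zero s)⟩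
  refine Eq.trans (congrArg (eval · G) (funext fun m => ?_)) hroot
  cases m using Fin.cases <;> simp

/-- Corollary 3.7 of Salberger, for a hypersurface `X = {F = 0} ⊂ P^n` (`r = n - 1`)
met properly by the hyperplane `x_0 = 0`: if `p_1, …, p_t` are distinct primes, `P_i` an
`𝔽_{p_i}`-point of multiplicity `μ_i` on `X_{p_i}` with `x_0(P_i) ≠ 0`, and
`p_1^{(d/μ_1)^{1/r}} ⋯ p_t^{(d/μ_t)^{1/r}} ≥ B^{1+ε}`, then there is a form `G` of
degree `O_{d,n,ε}(1)`, not divisible by `F`, vanishing at all points of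
`S_1(X;B;P_1,…,P_t)`. -/
theorem stmt_10 (n d : ℕ) (hn : 2 ≤ n) (hd : 1 ≤ d) (ε : ℝ) (hε : 0 < ε) :
    ∃ C : ℕ, ∀ F : MvPolynomial (Fin (n + 1)) ℤ,
      (∀ c : ℤ, (∀ m, c ∣ F.coeff m) → IsUnit c) →
      F.IsHomogeneous d →
      Irreducible (MvPolynomial.map (Int.castRingHom ℚ) F) →
      ¬ (X 0 ∣ F) →
      ∀ B : ℝ, 1 ≤ B →
      ∀ t : ℕ, ∀ p : Fin t → ℕ, (∀ i, (p i).Prime) → Function.Injective p →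
      ∀ v : (i : Fin t) → Fin (n + 1) → ZMod (p i), (∀ i, v i ≠ 0) → (∀ i, v i 0 ≠ 0) →
      ∀ μ : Fin t → ℕ, (∀ i, 1 ≤ μ i) → (∀ i, MultiplicityAt (p i) F (v i) (μ i)) →
      (∏ i, (p i : ℝ) ^ (((d : ℝ) / μ i) ^ ((1 : ℝ) / ((n : ℝ) - 1))) ≥ B ^ (1 + ε)) →
      ∃ G : MvPolynomial (Fin (n + 1)) ℚ, ∃ e ≤ C, G.IsHomogeneous e ∧
        ¬ (MvPolynomial.map (Int.castRingHom ℚ) F ∣ G) ∧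
        ∀ ξ : Fin (n + 1) → ℤ, ξ 0 = 1 →
          (∀ m, m ≠ 0 → (|ξ m| : ℝ) ≤ B) → eval ξ F = 0 →
          (∀ i, ReducesTo (p i) ξ (v i)) →
          eval (fun m => (ξ m : ℚ)) G = 0 := by
  obtain ⟨C, hC⟩ := stmt_10_general n d hn hd ε hε
  exact ⟨C, fun F _ hF _ hX B _ t p hp hpinj v _ hv0 μ hμ1 hμ hprod =>
    hC F hF hX B t p hp hpinj v hv0 μ hμ1 hμ hprod⟩
end

section
/- Let d ≥ 2. There exists a constant C = C(d) with the following property. Let F ∈ ℤ[x_0,x_1,x_2,x_3] be a primitive homogeneous polynomial of degree d which is irreducible over ℚ, defining X = {F = 0} ⊂ P^3, and let B ≥ 1 be real. Then either there exists a homogeneous polynomial G ∈ ℚ[x_0,x_1,x_2,x_3] of degree d, not a scalar multiple of F, which vanishes at every rational point of X of height at most B, or H(F) ≤ C·B^{d(d+1)(d+2)(d+3)/6}, where H(F) denotes the maximum of the absolute values of the coefficients of F. -/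
open MvPolynomial

/-!
Evaluating a form of degree `d` at `ξ` is pairing its coefficient vector with the vector of all
monomials of degree `d` at `ξ`. If every form vanishing at the given zeros of `F` is a multiple of
`F`, then the monomial vectors of these points span the orthogonal complement of the coefficient
vector `f` of `F`, and together with a unit vector at a nonzero coordinate `a` of `f` they span the
whole space. Rows chosen from them form an integer matrix `A` with `det A ≠ 0` and `A f = a w`,
where `w` is a `0`-`1` vector. By Cramer's rule `det A · f = a · cramer A w`; as `f` is primitive,
`a` divides `det A`, so a nonzero multiple of `f` is a vector of determinants with small entries.
-/

section LinearAlgebra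

open Finset Matrix

variable {ι : Type*} [Fintype ι]

lemma span_eq_top_of_forall_dotProduct_eq_zero {K : Type*} [Field K] {S : Set (ι → K)}
    (hS : ∀ v : ι → K, (∀ s ∈ S, s ⬝ᵥ v = 0) → v = 0) : Submodule.span K S = ⊤ := by
  classical
  by_contra hne
  obtain ⟨φ, hφ, hle⟩ := Submodule.exists_le_ker_of_lt_top _ (lt_top_iff_ne_top.mpr hne)
  obtain ⟨v, rfl⟩ := (dotProductEquiv K ι).surjective φ
  refine hφ ?_
  rw [hS v fun s hs => ?_, map_zero]
  simpa [dotProduct_comm] using hle (Submodule.subset_span hs)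

lemma span_insert_single_eq_top [DecidableEq ι] {K : Type*} [Field K] {S : Set (ι → K)}
    {v : ι → K} {i : ι} (hv : v i ≠ 0)
    (hS : ∀ g : ι → K, (∀ s ∈ S, s ⬝ᵥ g = 0) → ∃ c : K, g = c • v) :
    Submodule.span K (insert (Pi.single i 1) S) = ⊤ := by
  refine span_eq_top_of_forall_dotProduct_eq_zero fun g hg => ?_
  obtain ⟨c, rfl⟩ := hS g fun s hs => hg s (Set.mem_insert_of_mem _ hs)
  have hcoord : c * v i = 0 := by simpa using hg _ (Set.mem_insert _ _)
  rw [(mul_eq_zero.mp hcoord).resolve_right hv, zero_smul]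

lemma exists_matrix_row_mem_det_ne_zero [DecidableEq ι] {R K : Type*} [CommRing R] [Field K]
    (φ : R →+* K) {T : Set (ι → R)} (hT : Submodule.span K ((φ ∘ ·) '' T) = ⊤) :
    ∃ A : Matrix ι ι R, (∀ j, A.row j ∈ T) ∧ A.det ≠ 0 := by
  obtain ⟨b, hbT, hspan, hli⟩ := exists_linearIndependent K ((φ ∘ ·) '' T)
  let basis : Module.Basis b K (ι → K) := .mk hli (by rw [Subtype.range_coe, hspan, hT])
  let e : ι ≃ b := (Pi.basisFun K ι).indexEquiv basis
  choose A hAT hA using fun j => hbT (e j).2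
  refine ⟨of A, hAT, fun hdet => ?_⟩
  have hrows : LinearIndependent K ((of A).map φ).row := by
    rw [show ((of A).map φ).row = Subtype.val ∘ e from funext hA]
    exact hli.comp e e.injective
  rw [linearIndependent_rows_iff_isUnit, isUnit_iff_isUnit_det] at hrows
  refine hrows.ne_zero ?_
  rw [← RingHom.mapMatrix_apply, ← RingHom.map_det, hdet, map_zero]

lemma exists_smul_eq_cramer [DecidableEq ι] {R : Type*} [CommRing R] [IsDomain R]
    [NormalizedGCDMonoid R] {A : Matrix ι ι R} {f w : ι → R} {a : R} (hA : A.det ≠ 0) (ha : a ≠ 0)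
    (hf : univ.gcd f = 1) (h : A *ᵥ f = a • w) :
    ∃ k : R, k ≠ 0 ∧ k • f = A.cramer w := by
  have hcramer : A.det • f = a • A.cramer w := by
    rw [← map_smul, ← h, cramer_eq_adjugate_mulVec, mulVec_mulVec, adjugate_mul, smul_mulVec,
      one_mulVec]
  obtain ⟨k, hk⟩ : a ∣ A.det := by
    have hdvd : a ∣ univ.gcd fun i => A.det * f i :=
      dvd_gcd fun i _ => ⟨_, congrFun hcramer i⟩
    simpa [hf] using hdvd.trans (Finset.gcd_mul_left' univ f A.det).dvd
  refine ⟨k, right_ne_zero_of_mul (hk ▸ hA), smul_right_injective _ ha ?_⟩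
  simpa only [smul_smul, hk] using hcramer

lemma abs_cramer_le [DecidableEq ι] {R : Type*} [CommRing R] [LinearOrder R] [IsStrictOrderedRing R]
    {A : Matrix ι ι R} {w : ι → R} {x : R} (hA : ∀ i j, |A i j| ≤ x) (hw : ∀ i, |w i| ≤ x) (i : ι) :
    |A.cramer w i| ≤ (Fintype.card ι).factorial * x ^ Fintype.card ι := by
  rw [cramer_apply, ← nsmul_eq_mul]
  refine det_le (abv := AbsoluteValue.abs) fun p q => ?_
  rw [updateCol_apply]
  split_ifs
  exacts [hw p, hA p q]

lemma exists_matrix_mulVec_eq_smul [DecidableEq ι] {f : ι → ℤ} {i : ι} (hi : f i ≠ 0)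
    {S : Set (ι → ℤ)} {x : ℤ} (hx : 1 ≤ x) (hSx : ∀ s ∈ S, ∀ i, |s i| ≤ x)
    (hSf : ∀ s ∈ S, s ⬝ᵥ f = 0)
    (hS : ∀ g : ι → ℚ, (∀ s ∈ S, (Int.castRingHom ℚ ∘ s) ⬝ᵥ g = 0) →
      ∃ c : ℚ, g = c • (Int.castRingHom ℚ ∘ f)) :
    ∃ (A : Matrix ι ι ℤ) (w : ι → ℤ),
      A.det ≠ 0 ∧ A *ᵥ f = f i • w ∧ (∀ j k, |A j k| ≤ x) ∧ ∀ j, |w j| ≤ x := by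
  have hspan : Submodule.span ℚ ((Int.castRingHom ℚ ∘ ·) '' insert (Pi.single i 1) S) = ⊤ := by
    have hsingle : Int.castRingHom ℚ ∘ Pi.single i 1 = Pi.single i 1 := by
      ext k
      simp [Pi.single_apply]
    rw [Set.image_insert_eq, hsingle]
    exact span_insert_single_eq_top (v := Int.castRingHom ℚ ∘ f) (by simpa using hi)
      (by simpa using hS)
  obtain ⟨A, hAS, hdet⟩ := exists_matrix_row_mem_det_ne_zero (Int.castRingHom ℚ) hspan
  have hA : ∀ j k, |A j k| ≤ x := fun j k => by
    rcases hAS j with h | h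
    · rw [show A j k = _ from congrFun h k, Pi.single_apply]
      split_ifs <;> simp <;> lia
    · exact hSx _ h k
  have hw : ∀ j, ∃ w : ℤ, A.row j ⬝ᵥ f = f i * w ∧ |w| ≤ x := fun j => by
    rcases hAS j with h | h
    · exact ⟨1, by simp [h], by simpa using hx⟩
    · exact ⟨0, by simp [hSf _ h], by simp; lia⟩
  choose w hwf hwx using hw
  exact ⟨A, w, hdet, funext hwf, hA, hwx⟩

lemma abs_le_of_forall_orthogonal_eq_smul {f : ι → ℤ} (hf : univ.gcd f = 1) {S : Set (ι → ℤ)}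
    {x : ℤ} (hx : 1 ≤ x) (hSx : ∀ s ∈ S, ∀ i, |s i| ≤ x) (hSf : ∀ s ∈ S, s ⬝ᵥ f = 0)
    (hS : ∀ g : ι → ℚ, (∀ s ∈ S, (Int.castRingHom ℚ ∘ s) ⬝ᵥ g = 0) →
      ∃ c : ℚ, g = c • (Int.castRingHom ℚ ∘ f)) (i : ι) :
    |f i| ≤ (Fintype.card ι).factorial * x ^ Fintype.card ι := by
  classical
  obtain ⟨i₀, hi₀⟩ : ∃ i₀, f i₀ ≠ 0 := by
    by_contra! hzero
    exact zero_ne_one ((gcd_eq_zero_iff.mpr fun i _ => hzero i).symm.trans hf)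
  obtain ⟨A, w, hdet, hAf, hA, hw⟩ := exists_matrix_mulVec_eq_smul hi₀ hx hSx hSf hS
  obtain ⟨k, hk, hkf⟩ := exists_smul_eq_cramer hdet hi₀ hf hAf
  calc |f i| ≤ |k| * |f i| := le_mul_of_one_le_left (abs_nonneg _) (Int.one_le_abs hk)
    _ = |A.cramer w i| := by rw [← abs_mul, ← hkf, Pi.smul_apply, smul_eq_mul]
    _ ≤ _ := abs_cramer_le hA hw i

end LinearAlgebra

section Forms

open Finset Matrix

variable {σ : Type*} {d : ℕ}

/-- The exponents of the monomials of degree `d` in the variables `σ`, which index the coefficients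
of a form of degree `d`. -/
abbrev DegreeExponent (σ : Type*) (d : ℕ) := {m : σ →₀ ℕ // m.degree = d}

/-- The coefficients of `F` in degree `d`, as a vector: a form of degree `d` is determined by it. -/
def coeffVector {R : Type*} [CommSemiring R] (d : ℕ) (F : MvPolynomial σ R) :
    DegreeExponent σ d → R :=
  fun m => F.coeff m

lemma gcd_coeffVector_eq_one [Fintype (DegreeExponent σ d)] {R : Type*} [CommSemiring R]
    [NormalizedGCDMonoid R] {F : MvPolynomial σ R} (hF : F.IsHomogeneous d)
    (hprim : ∀ c : R, (∀ m, c ∣ F.coeff m) → IsUnit c) : univ.gcd (coeffVector d F) = 1 := by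
  rw [← Finset.normalize_gcd]
  refine normalize_eq_one.mpr (hprim _ fun m => ?_)
  by_cases hm : m.degree = d
  · exact Finset.gcd_dvd (f := coeffVector d F) (mem_univ ⟨m, hm⟩)
  · simp [hF.coeff_eq_zero hm]

lemma exists_isHomogeneous_coeffVector_eq [Finite (DegreeExponent σ d)] {R : Type*}
    [CommSemiring R] (g : DegreeExponent σ d → R) :
    ∃ G : MvPolynomial σ R, G.IsHomogeneous d ∧ coeffVector d G = g := by
  classical
  cases nonempty_fintype (DegreeExponent σ d)
  refine ⟨∑ m, monomial m.1 (g m), .sum _ _ _ fun m _ => isHomogeneous_monomial _ m.2, ?_⟩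
  ext m
  simp [coeffVector, coeff_sum, coeff_monomial, Subtype.coe_inj]

variable [Fintype σ]

lemma mem_finsuppAntidiag_univ_iff [DecidableEq σ] {m : σ →₀ ℕ} :
    m ∈ univ.finsuppAntidiag d ↔ m.degree = d := by
  simp [Finsupp.degree_eq_sum]

noncomputable instance : Fintype (DegreeExponent σ d) :=
  open Classical in
  Fintype.subtype (univ.finsuppAntidiag d) fun _ => mem_finsuppAntidiag_univ_iff

lemma card_degreeExponent :
    Fintype.card (DegreeExponent σ d) = (Fintype.card σ).multichoose d := by
  classical
  exact (Fintype.card_of_subtype _ fun _ => mem_finsuppAntidiag_univ_iff).trans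
    (card_finsuppAntidiag_nat_eq_multichoose d)

/-- The values at `ξ` of all monomials of degree `d`, i.e. the degree `d` Veronese map on affine
coordinates. -/
def veronese {R : Type*} [CommSemiring R] (d : ℕ) (ξ : σ → R) : DegreeExponent σ d → R :=
  fun m => ∏ i, ξ i ^ m.1 i

lemma comp_veronese {R S : Type*} [CommSemiring R] [CommSemiring S] (φ : R →+* S) (ξ : σ → R) :
    φ ∘ veronese d ξ = veronese d (φ ∘ ξ) := by
  ext m
  simp [veronese]

lemma abs_veronese_le {R : Type*} [CommRing R] [LinearOrder R] [IsStrictOrderedRing R]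
    {ξ : σ → R} {x : R} (hξ : ∀ i, |ξ i| ≤ x) (m : DegreeExponent σ d) :
    |veronese d ξ m| ≤ x ^ d :=
  calc |veronese d ξ m| = ∏ i, |ξ i| ^ m.1 i := by simp only [veronese, abs_prod, abs_pow]
    _ ≤ ∏ i, x ^ m.1 i := by gcongr with i; exact hξ i
    _ = x ^ d := by rw [prod_pow_eq_pow_sum, ← Finsupp.degree_eq_sum, m.2]

lemma eval_eq_veronese_dotProduct {R : Type*} [CommSemiring R] {F : MvPolynomial σ R}
    (hF : F.IsHomogeneous d) (ξ : σ → R) : eval ξ F = veronese d ξ ⬝ᵥ coeffVector d F := by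
  classical
  calc eval ξ F = ∑ m ∈ F.support, F.coeff m * ∏ i, ξ i ^ m i := eval_eq' ξ F
    _ = ∑ m ∈ univ.finsuppAntidiag d, F.coeff m * ∏ i, ξ i ^ m i := by
      refine sum_subset (fun m hm => ?_) fun m _ hm => ?_
      · exact mem_finsuppAntidiag_univ_iff.mpr (hF.degree_eq_sum_deg_support hm).symm
      · rw [notMem_support_iff.mp hm, zero_mul]
    _ = coeffVector d F ⬝ᵥ veronese d ξ := sum_subtype _ (fun _ => mem_finsuppAntidiag_univ_iff) _
    _ = veronese d ξ ⬝ᵥ coeffVector d F := dotProduct_comm _ _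

lemma abs_coeff_le_of_forall_vanishing {F : MvPolynomial σ ℤ}
    (hprim : ∀ c : ℤ, (∀ m, c ∣ F.coeff m) → IsUnit c) (hF : F.IsHomogeneous d)
    {P : Set (σ → ℤ)} {B : ℤ} (hB : 1 ≤ B) (hPB : ∀ ξ ∈ P, ∀ i, |ξ i| ≤ B)
    (hPF : ∀ ξ ∈ P, eval ξ F = 0)
    (hP : ∀ G : MvPolynomial σ ℚ, G.IsHomogeneous d →
      (∀ ξ ∈ P, eval (fun i => (ξ i : ℚ)) G = 0) →
        ∃ c : ℚ, G = c • MvPolynomial.map (Int.castRingHom ℚ) F) (m : σ →₀ ℕ) :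
    |F.coeff m| ≤ ((Fintype.card σ).multichoose d).factorial *
      B ^ (d * (Fintype.card σ).multichoose d) := by
  by_cases hm : m.degree = d
  swap
  · rw [hF.coeff_eq_zero hm, abs_zero]
    positivity
  rw [pow_mul, ← card_degreeExponent]
  refine abs_le_of_forall_orthogonal_eq_smul (gcd_coeffVector_eq_one hF hprim)
    (S := veronese d '' P) (one_le_pow₀ hB) ?_ ?_ ?_ ⟨m, hm⟩
  · rintro _ ⟨ξ, hξ, rfl⟩
    exact abs_veronese_le (hPB ξ hξ)
  · rintro _ ⟨ξ, hξ, rfl⟩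
    rw [← eval_eq_veronese_dotProduct hF, hPF ξ hξ]
  · intro g hg
    obtain ⟨G, hG, rfl⟩ := exists_isHomogeneous_coeffVector_eq g
    obtain ⟨c, rfl⟩ := hP G hG fun ξ hξ => by
      have horth := hg _ ⟨ξ, hξ, rfl⟩
      rwa [comp_veronese, ← eval_eq_veronese_dotProduct hG] at horth
    exact ⟨c, by ext; simp [coeffVector, MvPolynomial.coeff_map]⟩

end Forms

lemma six_mul_multichoose_four (d : ℕ) :
    6 * Nat.multichoose 4 d = (d + 1) * (d + 2) * (d + 3) := by
  calc 6 * Nat.multichoose 4 d = Nat.factorial 3 * (d + 3).choose 3 := by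
        rw [Nat.multichoose_eq, show 4 + d - 1 = d + 3 by lia, Nat.choose_symm_add]; rfl
    _ = (d + 3).descFactorial 3 := (Nat.descFactorial_eq_factorial_mul_choose _ _).symm
    _ = (d + 1) * (d + 2) * (d + 3) := by simp [Nat.descFactorial]; ring

lemma natCast_mul_multichoose_four (d : ℕ) :
    ((d * Nat.multichoose 4 d : ℕ) : ℝ) = d * (d + 1) * (d + 2) * (d + 3) / 6 := by
  have h : (6 : ℝ) * Nat.multichoose 4 d = (d + 1) * (d + 2) * (d + 3) := by
    exact_mod_cast six_mul_multichoose_four d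
  push_cast
  linear_combination (d / 6 : ℝ) * h

theorem stmt_12_general {σ : Type*} [Fintype σ] {d : ℕ} {F : MvPolynomial σ ℤ}
    (hprim : ∀ c : ℤ, (∀ m, c ∣ F.coeff m) → IsUnit c) (hF : F.IsHomogeneous d)
    {B : ℝ} (hB : 1 ≤ B) :
    (∃ G : MvPolynomial σ ℚ, G.IsHomogeneous d ∧
      (¬ ∃ c : ℚ, G = c • MvPolynomial.map (Int.castRingHom ℚ) F) ∧
      ∀ ξ : σ → ℤ, (∀ i, (|ξ i| : ℝ) ≤ B) → eval ξ F = 0 →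
        eval (fun i => (ξ i : ℚ)) G = 0) ∨
    ∀ m, ((|F.coeff m| : ℤ) : ℝ) ≤ ((Fintype.card σ).multichoose d).factorial *
      B ^ (d * (Fintype.card σ).multichoose d) := by
  rw [or_iff_not_imp_left]
  intro hG m
  have hfloor : |F.coeff m| ≤ ((Fintype.card σ).multichoose d).factorial *
      ⌊B⌋ ^ (d * (Fintype.card σ).multichoose d) :=
    abs_coeff_le_of_forall_vanishing hprim hF (P := {ξ | (∀ i, |ξ i| ≤ ⌊B⌋) ∧ eval ξ F = 0})
      (Int.le_floor.mpr (by simpa using hB)) (fun _ h => h.1) (fun _ h => h.2)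
      (fun G hGd hGP => by
        by_contra hGF
        exact hG ⟨G, hGd, hGF, fun ξ hξ hξF =>
          hGP ξ ⟨fun i => Int.le_floor.mpr (by simpa using hξ i), hξF⟩⟩) m
  calc ((|F.coeff m| : ℤ) : ℝ)
      ≤ ((Fintype.card σ).multichoose d).factorial *
          (⌊B⌋ : ℝ) ^ (d * (Fintype.card σ).multichoose d) := by exact_mod_cast hfloor
    _ ≤ _ := by gcongr; exact Int.floor_le B

/-- Lemma 6.3 of Salberger (Browning–Heath-Brown): for an irreducible primitive
quaternary form `F` of degree `d ≥ 2` defining `X = Proj ℚ[x_0,…,x_3]/(F)`, either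
there is a form `G` of degree `d`, not proportional to `F`, vanishing on `S(X;B)`, or
`H(F) ≪_d B^{d(d+1)(d+2)(d+3)/6}`, where `H(F)` is the maximum absolute value of the
coefficients of `F`. -/
theorem stmt_12 (d : ℕ) (hd : 2 ≤ d) :
    ∃ C : ℝ, ∀ F : MvPolynomial (Fin 4) ℤ,
      (∀ c : ℤ, (∀ m, c ∣ F.coeff m) → IsUnit c) →
      F.IsHomogeneous d →
      Irreducible (MvPolynomial.map (Int.castRingHom ℚ) F) →
      ∀ B : ℝ, 1 ≤ B →
        (∃ G : MvPolynomial (Fin 4) ℚ, G.IsHomogeneous d ∧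
          (¬ ∃ c : ℚ, G = c • MvPolynomial.map (Int.castRingHom ℚ) F) ∧
          ∀ ξ : Fin 4 → ℤ, Finset.univ.gcd ξ = 1 → (∀ i, (|ξ i| : ℝ) ≤ B) →
            eval ξ F = 0 → eval (fun i => (ξ i : ℚ)) G = 0) ∨
        (∀ m, ((|F.coeff m| : ℤ) : ℝ) ≤
          C * B ^ ((d * (d + 1) * (d + 2) * (d + 3) : ℝ) / 6)) := by
  refine ⟨(Nat.multichoose 4 d).factorial, fun F hprim hF _ B hB => ?_⟩
  rw [← natCast_mul_multichoose_four, Real.rpow_natCast]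
  exact (stmt_12_general hprim hF hB).imp_left fun ⟨G, hG, hGF, hGP⟩ =>
    ⟨G, hG, hGF, fun ξ _ => hGP ξ⟩
end
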